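/- For l ∈ ℝ⁶ let l⁺ ∈ ℝ⁶ be the vector with coordinates l⁺_ij = max(l_ij, 0), and define the dihedral angle function a_ij(l) = arccos(φ_ij(l⁺)) ∈ [0, π], where arccos : ℝ → [0, π] is the clamped inverse cosine (equal to π on arguments ≤ −1 and to 0 on arguments ≥ 1, as Real.arccos in Mathlib). Then there exists a C¹-smooth convex function cov : ℝ⁶ → ℝ such that ∂cov/∂l_ij(l) = a_ij(l) for every l ∈ ℝ⁶ and every pair {i,j} ⊂ {1,2,3,4}. -/

import Mathlib

/-- `bfun l i j k` is the quantity `b_h = √(2 c_ij c_ik c_jk + c_ij² + c_ik² + c_jk² − 1)`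
attached to the vertex `h` whose three opposite vertices are `i, j, k`
(where `c_rs = cosh l_rs`). -/
noncomputable def bfun (l : Fin 4 → Fin 4 → ℝ) (i j k : Fin 4) : ℝ :=
  Real.sqrt (2 * Real.cosh (l i j) * Real.cosh (l i k) * Real.cosh (l j k) +
    Real.cosh (l i j) ^ 2 + Real.cosh (l i k) ^ 2 + Real.cosh (l j k) ^ 2 - 1)

/-- `φ_ij(l) = (c_ik c_ih + c_jk c_jh + c_ij c_ik c_jh + c_ij c_ih c_jk − s_ij² c_kh)/(b_k b_h)`,
where `{i,j,k,h} = {1,2,3,4}`, `c_rs = cosh l_rs`, `s_rs = sinh l_rs`,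
`b_k = bfun l i j h` and `b_h = bfun l i j k`. -/
noncomputable def phiE (l : Fin 4 → Fin 4 → ℝ) (i j k h : Fin 4) : ℝ :=
  (Real.cosh (l i k) * Real.cosh (l i h) + Real.cosh (l j k) * Real.cosh (l j h) +
    Real.cosh (l i j) * Real.cosh (l i k) * Real.cosh (l j h) +
    Real.cosh (l i j) * Real.cosh (l i h) * Real.cosh (l j k) -
    Real.sinh (l i j) ^ 2 * Real.cosh (l k h)) /
  (bfun l i j h * bfun l i j k)

/-- The index in `Fin 6` of the edge `{r,s}` of the tetrahedron on vertices
`{0,1,2,3}`, edges ordered as `01, 02, 03, 12, 13, 23`. -/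
def eIdx (r s : Fin 4) : Fin 6 :=
  match r.val, s.val with
  | 0, 1 => 0 | 1, 0 => 0
  | 0, 2 => 1 | 2, 0 => 1
  | 0, 3 => 2 | 3, 0 => 2
  | 1, 2 => 3 | 2, 1 => 3
  | 1, 3 => 4 | 3, 1 => 4
  | 2, 3 => 5 | 3, 2 => 5
  | _, _ => 0

/-- The symmetric edge-length array attached to a vector `l ∈ ℝ⁶`. -/
def toMat (l : Fin 6 → ℝ) : Fin 4 → Fin 4 → ℝ :=
  fun r s => if r = s then 0 else l (eIdx r s)

section Helpers
open Set Filter Topology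
open scoped Matrix
set_option linter.unusedSimpArgs false

/-- numerator polynomial -/
def num (p q r s t u : ℝ) : ℝ := r*s + t*u + p*(r*u + s*t) + q*(1 - p^2)
def tri (x y z : ℝ) : ℝ := 2*x*y*z + x^2 + y^2 + z^2 - 1
def Dl (p q r s t u : ℝ) : ℝ := -1+p^2+q^2+r^2+s^2+t^2+u^2 - p^2*q^2-r^2*u^2-s^2*t^2
  + 2*(p*q*r*u+p*q*s*t+r*u*s*t)+2*(p*r*t+p*s*u+r*s*q+t*u*q)

lemma J1 (p q r s t u : ℝ) : num p q r s t u ^ 2 - tri p r t * tri p s u = Dl p q r s t u * (1 - p^2) := by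
  unfold num tri Dl; ring
lemma J2 (p q r s t u : ℝ) : tri p r t + q*num p q r s t u + s*num t s p u r q + u*num r u p s t q
    = Dl p q r s t u := by
  unfold num tri Dl; ring
lemma J3 (p q r s t u : ℝ) : num p q r s t u * tri r s q + num r u p s t q * num s t p r u q
    = Dl p q r s t u * (q + r * s) := by
  unfold num tri Dl; ring
lemma J5 (p q r s t u : ℝ) : 2 * num p q r s t u * num r u p s t q * num s t p r u q
    + num p q r s t u ^ 2 * tri r s q + num r u p s t q ^ 2 * tri p s u + num s t p r u q ^ 2 * tri p r t
    - tri r s q * tri p s u * tri p r t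
    = Dl p q r s t u ^ 2 := by
  unfold num tri Dl; ring
lemma J4 (p q r s t u : ℝ) : num r u p s t q * num t s p u r q * tri p s u
    + num s t p r u q * num u r p t s q * tri p r t
    + num p q r s t u * (num r u p s t q * num u r p t s q + num s t p r u q * num t s p u r q)
    + num q p r t s u * (tri p s u * tri p r t - num p q r s t u ^ 2)
    = Dl p q r s t u ^ 2 * p := by
  unfold num tri Dl; ring
-- derivative identities, L arrangement
lemma K1 (p q r s t u : ℝ) : (s + p * u) * tri p r t - num p q r s t u * (r + p * t)
   = - (1 - p^2) * num t s p u r q := by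
  unfold num tri; ring


/-- A function with a continuous selection of subgradients is convex and `C¹`. -/
lemma grad_of_subgrad (cov : (Fin 6 → ℝ) → ℝ) (F : (Fin 6 → ℝ) → Fin 6 → ℝ) (hF : Continuous F)
    (h : ∀ l m, cov l + ∑ e, F l e * (m e - l e) ≤ cov m) :
    ContDiff ℝ 1 cov ∧ ConvexOn ℝ Set.univ cov ∧
      ∀ l e, fderiv ℝ cov l (Pi.single e 1) = F l e := by
  set G : (Fin 6 → ℝ) → ((Fin 6 → ℝ) →L[ℝ] ℝ) :=
    fun l => ∑ e, F l e • (ContinuousLinearMap.proj (R := ℝ) (φ := fun _ : Fin 6 => ℝ) e) with hG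
  have hGa : ∀ l v, G l v = ∑ e, F l e * v e := by
    intro l v; simp [hG]
  have hGc : Continuous G := by
    refine continuous_finsetSum _ fun e _ => ?_
    exact ((continuous_apply e).comp hF).smul continuous_const
  have h' : ∀ l m, cov l + G l (m - l) ≤ cov m := by
    intro l m; rw [hGa]; simpa using h l m
  have hd : ∀ l, HasFDerivAt cov (G l) l := by
    intro l
    rw [hasFDerivAt_iff_isLittleO]
    rw [Asymptotics.isLittleO_iff]
    intro c hc
    have : ∀ᶠ m in 𝓝 l, ‖G m - G l‖ < c := by
      have := hGc.tendsto l
      rw [tendsto_iff_norm_sub_tendsto_zero] at this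
      exact this.eventually (gt_mem_nhds hc)
    filter_upwards [this] with m hm
    have h1 := h' l m
    have h2 := h' m l
    have h3 : (G m - G l) (m - l) ≤ c * ‖m - l‖ := by
      refine (le_abs_self _).trans ?_
      refine ((G m - G l).le_opNorm (m - l)).trans ?_
      gcongr
    have h4 : G m (l - m) = - G m (m - l) := by rw [← map_neg]; simp
    rw [Real.norm_eq_abs, abs_le]
    simp only [sub_apply] at h3
    have := norm_nonneg (m - l)
    constructor <;> nlinarith
  refine ⟨?_, ⟨convex_univ, ?_⟩, ?_⟩
  · rw [contDiff_one_iff_fderiv]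
    refine ⟨fun l => (hd l).differentiableAt, ?_⟩
    have : fderiv ℝ cov = G := funext fun l => (hd l).fderiv
    rwa [this]
  · intro x _ y _ a b ha hb hab
    have h1 := h' (a • x + b • y) x
    have h2 := h' (a • x + b • y) y
    have e1 : a * G (a • x + b • y) (x - (a • x + b • y)) + b * G (a • x + b • y) (y - (a • x + b • y)) = 0 := by
      rw [← smul_eq_mul, ← smul_eq_mul, ← map_smul, ← map_smul, ← map_add]
      have : a • (x - (a • x + b • y)) + b • (y - (a • x + b • y)) = (0 : Fin 6 → ℝ) := by
        have : b = 1 - a := by linarith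
        subst this
        ext i; simp; ring
      rw [this, map_zero]
    simp only [smul_eq_mul]
    have : cov (a • x + b • y) = (a + b) * cov (a • x + b • y) := by rw [hab, one_mul]
    rw [this]
    nlinarith [mul_le_mul_of_nonneg_left h1 ha, mul_le_mul_of_nonneg_left h2 hb]
  · intro l e
    rw [(hd l).fderiv, hGa]
    simp [Pi.single_apply]

/-- Positive semidefiniteness propagates along connected families of invertible symmetric matrices. -/
lemma psd_of_connected (B : Set (Fin 6 → ℝ)) (hBo : IsOpen B) (hBc : IsPreconnected B)
    (M : (Fin 6 → ℝ) → Matrix (Fin 6) (Fin 6) ℝ) (hM : ContinuousOn M B)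
    (hs : ∀ a ∈ B, ∀ e f, M a e f = M a f e)
    (hn : ∀ a ∈ B, ∀ v, M a *ᵥ v = 0 → v = 0)
    (a₀ : Fin 6 → ℝ) (ha₀ : a₀ ∈ B) (h0 : ∀ v, 0 ≤ v ⬝ᵥ (M a₀ *ᵥ v)) :
    ∀ a ∈ B, ∀ v, 0 ≤ v ⬝ᵥ (M a *ᵥ v) := by
  have strict : ∀ a ∈ B, (∀ v, 0 ≤ v ⬝ᵥ (M a *ᵥ v)) → ∀ v, v ≠ 0 → 0 < v ⬝ᵥ (M a *ᵥ v) := by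
    intro a ha h v hv
    have hp : (M a).PosSemidef := by
      refine Matrix.PosSemidef.of_dotProduct_mulVec_nonneg ?_ ?_
      · ext i j; simpa using hs a ha j i
      · intro x; simpa using h x
    refine lt_of_le_of_ne (h v) fun h' => hv ?_
    refine hn a ha v ?_
    rw [← hp.dotProduct_mulVec_zero_iff]
    simpa using h'.symm
  have hc : ∀ a ∈ B, ∀ v, ContinuousAt (fun z : (Fin 6 → ℝ) × (Fin 6 → ℝ) => z.2 ⬝ᵥ (M z.1 *ᵥ z.2)) (a, v) := by
    intro a ha v
    have hMa : ContinuousAt M a := hM.continuousAt (hBo.mem_nhds ha)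
    have h1 : ContinuousAt (fun z : (Fin 6 → ℝ) × (Fin 6 → ℝ) => M z.1) (a, v) :=
      ContinuousAt.comp (f := Prod.fst) (x := (a, v)) hMa continuousAt_fst
    have h2 : Continuous fun w : Matrix (Fin 6) (Fin 6) ℝ × (Fin 6 → ℝ) => w.2 ⬝ᵥ (w.1 *ᵥ w.2) := by
      unfold Matrix.mulVec dotProduct
      fun_prop
    exact ContinuousAt.comp (f := fun z : (Fin 6 → ℝ) × (Fin 6 → ℝ) => (M z.1, z.2)) (x := (a, v))
      h2.continuousAt (h1.prodMk continuousAt_snd)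
  set u : Set (Fin 6 → ℝ) := {a | a ∈ B ∧ ∀ v, v ≠ 0 → 0 < v ⬝ᵥ (M a *ᵥ v)} with hu
  have huo : IsOpen u := by
    rw [isOpen_iff_mem_nhds]
    rintro a ⟨ha, hpos⟩
    have h1 : ∀ᶠ x in 𝓝 a, ∀ v ∈ Metric.sphere (0 : Fin 6 → ℝ) 1, 0 < v ⬝ᵥ (M x *ᵥ v) := by
      refine (isCompact_sphere (0 : Fin 6 → ℝ) 1).eventually_forall_of_forall_eventually ?_
      intro v hv
      have hv0 : v ≠ 0 := by
        rintro rfl; simp at hv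
      exact (hc a ha v).eventually (lt_mem_nhds (hpos v hv0))
    filter_upwards [h1, hBo.mem_nhds ha] with x hx hxB
    refine ⟨hxB, fun v hv => ?_⟩
    have hnv : 0 < ‖v‖ := norm_pos_iff.mpr hv
    have := hx (‖v‖⁻¹ • v) (by simp [norm_smul, hnv.ne'])
    rw [Matrix.mulVec_smul, smul_dotProduct, dotProduct_smul, smul_eq_mul, smul_eq_mul] at this
    have hi : 0 < ‖v‖⁻¹ := inv_pos.mpr hnv
    by_contra hcon
    push Not at hcon
    have h3 : ‖v‖⁻¹ * (‖v‖⁻¹ * v ⬝ᵥ (M x *ᵥ v)) ≤ 0 :=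
      mul_nonpos_of_nonneg_of_nonpos hi.le (mul_nonpos_of_nonneg_of_nonpos hi.le hcon)
    linarith
  have hsub : B ⊆ u := by
    refine hBc.subset_of_closure_inter_subset huo ⟨a₀, ha₀, ha₀, strict a₀ ha₀ h0⟩ ?_
    rintro a ⟨hcl, ha⟩
    refine ⟨ha, strict a ha fun v => ?_⟩
    by_cases hv : v = 0
    · simp [hv]
    have h1 : ContinuousAt (fun x => v ⬝ᵥ (M x *ᵥ v)) a :=
      ContinuousAt.comp (f := fun x => (x, v)) (x := a) (hc a ha v) (by fun_prop)
    rw [mem_closure_iff_frequently] at hcl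
    by_contra hcon
    push Not at hcon
    have h2 := h1.eventually (gt_mem_nhds hcon)
    obtain ⟨x, hx1, hx2⟩ := (hcl.and_eventually h2).exists
    exact absurd (hx1.2 v hv) (not_lt.mpr hx2.le)
  intro a ha v
  by_cases hv : v = 0
  · simp [hv]
  exact ((hsub ha).2 v hv).le

/-- Existence of a convex potential. -/
lemma potential (B : Set (Fin 6 → ℝ)) (hBo : IsOpen B) (hBc : Convex ℝ B)
    (L : (Fin 6 → ℝ) → Fin 6 → ℝ) (M : (Fin 6 → ℝ) → Matrix (Fin 6) (Fin 6) ℝ)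
    (hL : ∀ a ∈ B, ∀ e, HasFDerivAt (fun x => L x e)
      (∑ f, M a e f • (ContinuousLinearMap.proj (R := ℝ) (φ := fun _ : Fin 6 => ℝ) f)) a)
    (hs : ∀ a ∈ B, ∀ e f, M a e f = M a f e)
    (hp : ∀ a ∈ B, ∀ v, 0 ≤ v ⬝ᵥ (M a *ᵥ v)) :
    ∃ V : (Fin 6 → ℝ) → ℝ, ∀ a ∈ B, ∀ b ∈ B, V a + ∑ e, L a e * (b e - a e) ≤ V b := by
  set pr : Fin 6 → ((Fin 6 → ℝ) →L[ℝ] ℝ) :=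
    fun e => ContinuousLinearMap.proj (R := ℝ) (φ := fun _ : Fin 6 => ℝ) e with hpr
  set ω : (Fin 6 → ℝ) → ((Fin 6 → ℝ) →L[ℝ] ℝ) := fun a => ∑ e, L a e • pr e with hω
  have hωd : ∀ a ∈ B, HasFDerivAt ω
      (∑ e, (∑ f, M a e f • pr f).smulRight (pr e)) a := by
    intro a ha
    have := HasFDerivAt.fun_sum (u := Finset.univ) (fun e _ => (hL a ha e).smul_const (pr e))
    exact this
  obtain ⟨V, hV⟩ := hBc.exists_forall_hasFDerivAt_of_fderiv_symmetric (ω := ω) hBo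
    (fun a ha => (hωd a ha).differentiableAt.differentiableWithinAt) (by
      intro a ha x y
      rw [(hωd a ha).fderiv]
      simp only [sum_apply, ContinuousLinearMap.smulRight_apply,
        smul_apply, hpr, ContinuousLinearMap.proj_apply, smul_eq_mul, Finset.sum_mul]
      rw [Finset.sum_comm]
      refine Finset.sum_congr rfl fun e _ => Finset.sum_congr rfl fun f _ => ?_
      rw [hs a ha]; ring)
  refine ⟨V, fun a ha b hb => ?_⟩
  set v := b - a with hv
  have hmem : ∀ t ∈ Icc (0:ℝ) 1, a + t • v ∈ B := by
    intro t ht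
    have := hBc.add_smul_sub_mem ha hb ht
    exact this
  have hline : ∀ t : ℝ, HasDerivAt (fun t : ℝ => a + t • v) v t := by
    intro t
    simpa using ((hasDerivAt_id t).smul_const v).const_add a
  set g : ℝ → ℝ := fun t => ∑ e, L (a + t • v) e * v e with hg
  have hgω : ∀ t, ω (a + t • v) v = g t := by
    intro t; simp [hω, hg, hpr]
  have hf : ∀ t ∈ Icc (0:ℝ) 1, HasDerivAt (fun t : ℝ => V (a + t • v)) (g t) t := by
    intro t ht
    have := (hV _ (hmem t ht)).comp_hasDerivAt t (hline t)
    rw [hgω] at this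
    exact this
  have hg' : ∀ t ∈ Icc (0:ℝ) 1, HasDerivAt g (v ⬝ᵥ (M (a + t • v) *ᵥ v)) t := by
    intro t ht
    have := HasDerivAt.fun_sum (u := Finset.univ)
      (fun e _ => ((hL _ (hmem t ht) e).comp_hasDerivAt t (hline t)).mul_const (v e))
    refine this.congr_deriv ?_
    simp only [dotProduct, Matrix.mulVec]
    refine Finset.sum_congr rfl fun e _ => ?_
    simp [mul_comm]
  have hgm : MonotoneOn g (Icc 0 1) := by
    refine monotoneOn_of_deriv_nonneg (convex_Icc 0 1)
      (fun t ht => (hg' t ht).continuousAt.continuousWithinAt)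
      (fun t ht => (hg' t (interior_subset ht)).differentiableAt.differentiableWithinAt) ?_
    intro t ht
    rw [(hg' t (interior_subset ht)).deriv]
    exact hp _ (hmem t (interior_subset ht)) _
  have hh : ∀ t ∈ Icc (0:ℝ) 1, HasDerivAt (fun t : ℝ => V (a + t • v) - t * g 0) (g t - g 0) t := by
    intro t ht
    have := (hf t ht).fun_sub ((hasDerivAt_id' t).mul_const (g 0))
    rw [one_mul] at this
    exact this
  have hhm : MonotoneOn (fun t : ℝ => V (a + t • v) - t * g 0) (Icc 0 1) := by
    refine monotoneOn_of_deriv_nonneg (convex_Icc 0 1)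
      (fun t ht => (hh t ht).continuousAt.continuousWithinAt)
      (fun t ht => (hh t (interior_subset ht)).differentiableAt.differentiableWithinAt) ?_
    intro t ht
    rw [(hh t (interior_subset ht)).deriv]
    have := interior_subset ht
    have := hgm (left_mem_Icc.mpr zero_le_one) this this.1
    linarith
  have := hhm (left_mem_Icc.mpr zero_le_one) (right_mem_Icc.mpr zero_le_one) zero_le_one
  simp only [zero_smul, add_zero, zero_mul, sub_zero, one_smul, one_mul] at this
  have e1 : a + v = b := by simp [hv]
  have e2 : g 0 = ∑ e, L a e * (b e - a e) := by simp [hg, hv]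
  rw [e1, e2] at this
  linarith

/-- The Legendre transform of the potential. -/
lemma legendre (B : Set (Fin 6 → ℝ)) (a₀ : Fin 6 → ℝ) (ha₀ : a₀ ∈ B)
    (C : ℝ) (hB : ∀ b ∈ B, ∀ e, |b e| ≤ C)
    (L : (Fin 6 → ℝ) → Fin 6 → ℝ) (V : (Fin 6 → ℝ) → ℝ)
    (hV : ∀ a ∈ B, ∀ b ∈ B, V a + ∑ e, L a e * (b e - a e) ≤ V b)
    (F : (Fin 6 → ℝ) → Fin 6 → ℝ) (hF : Continuous F) (U : Set (Fin 6 → ℝ))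
    (hU : ∀ l ∈ U, F l ∈ B ∧ L (F l) = l)
    (hcl : ∀ l, ∃ l0 ∈ closure U, F l0 = F l ∧ ∀ b ∈ B, ∑ e, (l e - l0 e) * (b e - F l e) ≤ 0) :
    ∃ cov : (Fin 6 → ℝ) → ℝ, ∀ l m, cov l + ∑ e, F l e * (m e - l e) ≤ cov m := by
  have : Nonempty B := ⟨⟨a₀, ha₀⟩⟩
  have hC : 0 ≤ C := (abs_nonneg _).trans (hB a₀ ha₀ 0)
  set cov : (Fin 6 → ℝ) → ℝ := fun l => ⨆ b : B, (∑ e, l e * b.1 e - V b.1) with hcov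
  have hbdd : ∀ l : Fin 6 → ℝ, BddAbove (range fun b : B => (∑ e, l e * b.1 e - V b.1)) := by
    intro l
    refine ⟨∑ e, |l e - L a₀ e| * C + ∑ e, L a₀ e * a₀ e - V a₀, ?_⟩
    rintro _ ⟨⟨b, hb⟩, rfl⟩
    have h1 := hV a₀ ha₀ b hb
    have h2 : ∑ e, (l e - L a₀ e) * b e ≤ ∑ e, |l e - L a₀ e| * C := by
      refine Finset.sum_le_sum fun e _ => ?_
      refine (le_abs_self _).trans ?_
      rw [abs_mul]
      exact mul_le_mul_of_nonneg_left (hB b hb e) (abs_nonneg _)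
    simp only [sub_mul, mul_sub, Finset.sum_sub_distrib] at h1 h2 ⊢
    linarith
  have hle : ∀ l : Fin 6 → ℝ, ∀ b ∈ B, ∑ e, l e * b e - V b ≤ cov l := fun l b hb =>
    le_ciSup (hbdd l) (⟨b, hb⟩ : B)
  have hub : ∀ (l : Fin 6 → ℝ) (c : ℝ), (∀ b ∈ B, ∑ e, l e * b e - V b ≤ c) → cov l ≤ c :=
    fun l c h => ciSup_le fun b => h b.1 b.2
  have hdiff : ∀ l m : Fin 6 → ℝ, cov l ≤ cov m + ∑ e, |l e - m e| * C := by
    intro l m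
    refine hub _ _ fun b hb => ?_
    have h1 := hle m b hb
    have h2 : ∑ e, (l e - m e) * b e ≤ ∑ e, |l e - m e| * C := by
      refine Finset.sum_le_sum fun e _ => ?_
      refine (le_abs_self _).trans ?_
      rw [abs_mul]
      exact mul_le_mul_of_nonneg_left (hB b hb e) (abs_nonneg _)
    have h3 : ∑ e, (l e - m e) * b e = ∑ e, l e * b e - ∑ e, m e * b e := by
      simp [sub_mul, Finset.sum_sub_distrib]
    linarith
  have hcont : Continuous cov := by
    rw [continuous_iff_continuousAt]
    intro m
    rw [ContinuousAt, tendsto_iff_norm_sub_tendsto_zero]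
    have hz : Tendsto (fun l : Fin 6 → ℝ => ∑ e, |l e - m e| * C) (𝓝 m) (𝓝 0) := by
      have : Continuous fun l : Fin 6 → ℝ => ∑ e, |l e - m e| * C := by fun_prop
      have := this.tendsto m
      simpa using this
    refine squeeze_zero (fun _ => norm_nonneg _) (fun l => ?_) hz
    rw [Real.norm_eq_abs, abs_le]
    have h1 := hdiff l m
    have h2 := hdiff m l
    simp only [abs_sub_comm (m _) (l _)] at h2
    constructor <;> linarith
  have hUin : ∀ l ∈ U, ∀ m, cov l + ∑ e, F l e * (m e - l e) ≤ cov m := by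
    intro l hl m
    obtain ⟨hb, hLl⟩ := hU l hl
    have h1 : cov l ≤ ∑ e, l e * F l e - V (F l) := by
      refine hub _ _ fun b hb' => ?_
      have := hV _ hb _ hb'
      rw [hLl] at this
      simp only [mul_sub, Finset.sum_sub_distrib] at this
      linarith
    have h2 := hle m _ hb
    have h3 : ∑ e, F l e * (m e - l e) = ∑ e, m e * F l e - ∑ e, l e * F l e := by
      rw [← Finset.sum_sub_distrib]
      exact Finset.sum_congr rfl fun e _ => by ring
    linarith
  have hclU : ∀ l ∈ closure U, ∀ m, cov l + ∑ e, F l e * (m e - l e) ≤ cov m := by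
    intro l hl m
    have : IsClosed {l | cov l + ∑ e, F l e * (m e - l e) ≤ cov m} := by
      refine isClosed_le ?_ continuous_const
      refine hcont.add (continuous_finsetSum _ fun e _ => ?_)
      exact ((continuous_apply e).comp hF).mul (continuous_const.sub (continuous_apply e))
    exact closure_minimal (fun x hx => hUin x hx m) this hl
  refine ⟨cov, fun l m => ?_⟩
  obtain ⟨l0, hl0, hFe, hn⟩ := hcl l
  have h1 := hclU l0 hl0 m
  rw [hFe] at h1
  have h2 : cov l ≤ cov l0 + ∑ e, (l e - l0 e) * F l e := by
    refine hub _ _ fun b hb => ?_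
    have h3 := hn b hb
    have h4 := hle l0 b hb
    simp only [mul_sub, sub_mul, Finset.sum_sub_distrib] at h3 ⊢
    linarith
  have h3 : ∑ e, F l e * (m e - l e) + ∑ e, (l e - l0 e) * F l e = ∑ e, F l e * (m e - l0 e) := by
    rw [← Finset.sum_add_distrib]
    exact Finset.sum_congr rfl fun e _ => by ring
  linarith


noncomputable def Lg (p q r s t u : ℝ) : ℝ :=
  Real.arcosh (num p q r s t u / √(tri p r t * tri p s u))

/-- The abbreviations `N`, `A`, `D` in terms of the six cosines. -/
def Nn (c : Fin 6 → ℝ) : Fin 6 → ℝ :=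
  ![num (c 0) (c 5) (c 1) (c 3) (c 2) (c 4), num (c 1) (c 4) (c 0) (c 3) (c 2) (c 5),
    num (c 2) (c 3) (c 0) (c 4) (c 1) (c 5), num (c 3) (c 2) (c 0) (c 1) (c 4) (c 5),
    num (c 4) (c 1) (c 0) (c 2) (c 3) (c 5), num (c 5) (c 0) (c 1) (c 2) (c 3) (c 4)]
def An (c : Fin 6 → ℝ) : Fin 4 → ℝ :=
  ![tri (c 0) (c 1) (c 2), tri (c 0) (c 3) (c 4), tri (c 1) (c 3) (c 5), tri (c 2) (c 4) (c 5)]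
def Dn (c : Fin 6 → ℝ) : ℝ := Dl (c 0) (c 5) (c 1) (c 3) (c 2) (c 4)

noncomputable def co (a : Fin 6 → ℝ) : Fin 6 → ℝ := fun e => Real.cos (a e)

noncomputable def Lmap (a : Fin 6 → ℝ) : Fin 6 → ℝ :=
  ![Lg (co a 0) (co a 5) (co a 1) (co a 3) (co a 2) (co a 4),
    Lg (co a 1) (co a 4) (co a 0) (co a 3) (co a 2) (co a 5),
    Lg (co a 2) (co a 3) (co a 0) (co a 4) (co a 1) (co a 5),
    Lg (co a 3) (co a 2) (co a 0) (co a 1) (co a 4) (co a 5),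
    Lg (co a 4) (co a 1) (co a 0) (co a 2) (co a 3) (co a 5),
    Lg (co a 5) (co a 0) (co a 1) (co a 2) (co a 3) (co a 4)]

/-- The polytope of dihedral angles. -/
def Bset : Set (Fin 6 → ℝ) :=
  {a | (∀ e, 0 < a e) ∧ a 0 + a 1 + a 2 < Real.pi ∧ a 0 + a 3 + a 4 < Real.pi ∧
    a 1 + a 3 + a 5 < Real.pi ∧ a 2 + a 4 + a 5 < Real.pi}

lemma Bset_open : IsOpen Bset := by
  unfold Bset
  simp only [Set.ofPred_and, Set.ofPred_forall]
  refine (isOpen_iInter_of_finite fun e => isOpen_lt continuous_const (continuous_apply e)).inter ?_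
  refine IsOpen.inter ?_ (IsOpen.inter ?_ (IsOpen.inter ?_ ?_)) <;>
    exact isOpen_lt (by fun_prop) continuous_const

lemma Bset_convex : Convex ℝ Bset := by
  rintro x ⟨hx, hx1, hx2, hx3, hx4⟩ y ⟨hy, hy1, hy2, hy3, hy4⟩ a b ha hb hab
  have key : ∀ X Y c : ℝ, X < c → Y < c → a * X + b * Y < c := by
    intro X Y c h1 h2
    rcases ha.eq_or_lt with rfl | ha
    · have : b = 1 := by linarith
      subst this; linarith
    · have := mul_lt_mul_of_pos_left h1 ha
      have := mul_le_mul_of_nonneg_left h2.le hb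
      have : c = a * c + b * c := by rw [← add_mul, hab, one_mul]
      linarith
  refine ⟨fun e => ?_, ?_, ?_, ?_, ?_⟩ <;> simp only [Pi.add_apply, Pi.smul_apply, smul_eq_mul]
  · have := key (- x e) (- y e) 0 (by linarith [hx e]) (by linarith [hy e])
    linarith
  · linarith [key _ _ _ hx1 hy1]
  · linarith [key _ _ _ hx2 hy2]
  · linarith [key _ _ _ hx3 hy3]
  · linarith [key _ _ _ hx4 hy4]

lemma cos_star {x y z : ℝ} (hx : 0 < x) (hy : 0 < y) (hz : 0 < z) (h : x + y + z < Real.pi) :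
    Real.sin y * Real.sin z < Real.cos x + Real.cos y * Real.cos z := by
  have h1 : Real.cos (Real.pi - (y + z)) < Real.cos x :=
    Real.cos_lt_cos_of_nonneg_of_le_pi hx.le (by linarith) (by linarith)
  rw [Real.cos_pi_sub, Real.cos_add] at h1
  linarith

lemma tri_pos {x y z : ℝ} (hx : 0 < x) (hy : 0 < y) (hz : 0 < z) (h : x + y + z < Real.pi) :
    0 < tri (Real.cos x) (Real.cos y) (Real.cos z) := by
  have h1 := cos_star hx hy hz h
  have h2 := Real.sin_pos_of_pos_of_lt_pi hy (by linarith)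
  have h3 := Real.sin_pos_of_pos_of_lt_pi hz (by linarith)
  have h4 := mul_pos h2 h3
  have h5 := Real.sin_sq_add_cos_sq y
  have h6 := Real.sin_sq_add_cos_sq z
  have : tri (Real.cos x) (Real.cos y) (Real.cos z) =
      (Real.cos x + Real.cos y * Real.cos z)^2 - (Real.sin y * Real.sin z)^2 := by
    rw [mul_pow, eq_sub_of_add_eq h5, eq_sub_of_add_eq h6]; unfold tri; ring
  rw [this]
  nlinarith

lemma num_pos {p q r s t u : ℝ} (hp : 0 < p) (hq : 0 < q) (hr : 0 < r) (hs : 0 < s) (ht : 0 < t)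
    (hu : 0 < u) (hi : p + r + t < Real.pi) (hj : p + s + u < Real.pi) (hh : t + u + q < Real.pi) :
    0 < num (Real.cos p) (Real.cos q) (Real.cos r) (Real.cos s) (Real.cos t) (Real.cos u) ∧
    tri (Real.cos p) (Real.cos r) (Real.cos t) * tri (Real.cos p) (Real.cos s) (Real.cos u) <
    num (Real.cos p) (Real.cos q) (Real.cos r) (Real.cos s) (Real.cos t) (Real.cos u) ^ 2 := by
  have h1 := cos_star hq hu ht (by linarith)
  have h2 := cos_star hr ht hp (by linarith)
  have h3 := cos_star hs hu hp (by linarith)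
  have sp := Real.sin_pos_of_pos_of_lt_pi hp (by linarith)
  have su := Real.sin_pos_of_pos_of_lt_pi hu (by linarith)
  have st := Real.sin_pos_of_pos_of_lt_pi ht (by linarith)
  have ep := Real.sin_sq_add_cos_sq p
  have eu := Real.sin_sq_add_cos_sq u
  have et := Real.sin_sq_add_cos_sq t
  have hA : tri (Real.cos p) (Real.cos r) (Real.cos t) =
      (Real.cos r + Real.cos t * Real.cos p)^2 - (Real.sin t * Real.sin p)^2 := by
    rw [mul_pow, eq_sub_of_add_eq ep, eq_sub_of_add_eq et]; unfold tri; ring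
  have hB : tri (Real.cos p) (Real.cos s) (Real.cos u) =
      (Real.cos s + Real.cos u * Real.cos p)^2 - (Real.sin u * Real.sin p)^2 := by
    rw [mul_pow, eq_sub_of_add_eq ep, eq_sub_of_add_eq eu]; unfold tri; ring
  have hN : num (Real.cos p) (Real.cos q) (Real.cos r) (Real.cos s) (Real.cos t) (Real.cos u) =
      Real.sin p ^ 2 * (Real.cos q + Real.cos u * Real.cos t) +
      (Real.cos r + Real.cos t * Real.cos p) * (Real.cos s + Real.cos u * Real.cos p) := by
    rw [eq_sub_of_add_eq ep]; unfold num; ring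
  have pA := tri_pos hp hr ht hi
  have pB := tri_pos hp hs hu hj
  rw [hA] at pA
  rw [hB] at pB
  rw [hN, hA, hB]
  have x1 : 0 < Real.cos q + Real.cos u * Real.cos t := (mul_pos su st).trans h1
  have x2 : 0 < Real.cos r + Real.cos t * Real.cos p := (mul_pos st sp).trans h2
  have x3 : 0 < Real.cos s + Real.cos u * Real.cos p := (mul_pos su sp).trans h3
  have x4 : 0 < Real.sin p ^ 2 * (Real.cos q + Real.cos u * Real.cos t) := by positivity
  generalize Real.sin p ^ 2 * (Real.cos q + Real.cos u * Real.cos t) = X at *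
  generalize Real.cos r + Real.cos t * Real.cos p = Y at *
  generalize Real.cos s + Real.cos u * Real.cos p = Z at *
  refine ⟨by positivity, ?_⟩
  calc _ ≤ Y^2 * Z^2 := by
        apply mul_le_mul _ _ pB.le (by positivity)
        · linarith [sq_nonneg (Real.sin t * Real.sin p)]
        · linarith [sq_nonneg (Real.sin u * Real.sin p)]
    _ < _ := by nlinarith [mul_pos x2 x3, mul_pos x4 (mul_pos x2 x3)]

/-- Positivity of all the basic quantities on the polytope. -/
lemma Bset_pos {a : Fin 6 → ℝ} (ha : a ∈ Bset) :
    (∀ e, 0 < Nn (co a) e) ∧ (∀ v, 0 < An (co a) v) ∧ 0 < Dn (co a) ∧ (∀ e, 0 < Real.sin (a e)) := by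
  obtain ⟨hp, h0, h1, h2, h3⟩ := ha
  have p0 := hp 0
  have p1 := hp 1
  have p2 := hp 2
  have p3 := hp 3
  have p4 := hp 4
  have p5 := hp 5
  have hs : ∀ e, 0 < Real.sin (a e) := by
    intro e
    apply Real.sin_pos_of_pos_of_lt_pi (hp e)
    fin_cases e <;> simp <;> linarith
  refine ⟨?_, ?_, ?_, hs⟩
  · intro e
    fin_cases e
    · exact (num_pos p0 p5 p1 p3 p2 p4 (by linarith) (by linarith) (by linarith)).1
    · exact (num_pos p1 p4 p0 p3 p2 p5 (by linarith) (by linarith) (by linarith)).1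
    · exact (num_pos p2 p3 p0 p4 p1 p5 (by linarith) (by linarith) (by linarith)).1
    · exact (num_pos p3 p2 p0 p1 p4 p5 (by linarith) (by linarith) (by linarith)).1
    · exact (num_pos p4 p1 p0 p2 p3 p5 (by linarith) (by linarith) (by linarith)).1
    · exact (num_pos p5 p0 p1 p2 p3 p4 (by linarith) (by linarith) (by linarith)).1
  · intro v
    fin_cases v
    · exact tri_pos p0 p1 p2 h0
    · exact tri_pos p0 p3 p4 h1
    · exact tri_pos p1 p3 p5 h2
    · exact tri_pos p2 p4 p5 h3
  · have h := (num_pos p0 p5 p1 p3 p2 p4 (by linarith) (by linarith) (by linarith)).2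
    have hJ := J1 (co a 0) (co a 5) (co a 1) (co a 3) (co a 2) (co a 4)
    have hsp : 0 < 1 - co a 0 ^ 2 := by
      have := Real.sin_sq_add_cos_sq (a 0)
      have := pow_pos (hs 0) 2
      unfold co; linarith
    have h' : 0 < Dn (co a) * (1 - co a 0 ^ 2) := by
      unfold Dn
      rw [← hJ]
      unfold co
      linarith
    exact pos_of_mul_pos_left h' hsp.le



/-- Derivative of one edge length in terms of the six dihedral angles. -/
lemma row (p q r s t u : Fin 6) (a : Fin 6 → ℝ) (A0 A1 D N nr ns nt nu : ℝ)
    (hA0 : tri (co a p) (co a r) (co a t) = A0) (hA1 : tri (co a p) (co a s) (co a u) = A1)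
    (hD : Dl (co a p) (co a q) (co a r) (co a s) (co a t) (co a u) = D)
    (hN : num (co a p) (co a q) (co a r) (co a s) (co a t) (co a u) = N)
    (hnr : num (co a t) (co a s) (co a p) (co a u) (co a r) (co a q) = nr)
    (hnt : num (co a r) (co a u) (co a p) (co a s) (co a t) (co a q) = nt)
    (hns : num (co a u) (co a r) (co a p) (co a t) (co a s) (co a q) = ns)
    (hnu : num (co a s) (co a t) (co a p) (co a r) (co a u) (co a q) = nu)
    (pA0 : 0 < A0) (pA1 : 0 < A1) (pD : 0 < D) (pN : 0 < N) (ps : 0 < Real.sin (a p)) :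
    HasFDerivAt (fun x => Lg (co x p) (co x q) (co x r) (co x s) (co x t) (co x u))
      ((-(co a r * co a u + co a s * co a t - 2 * co a p * co a q
          - N * ((co a r * co a t + co a p) / A0 + (co a s * co a u + co a p) / A1)) / √D) •
            (ContinuousLinearMap.proj (R := ℝ) (φ := fun _ : Fin 6 => ℝ) p)
        + (-(Real.sin (a p) * Real.sin (a q)) / √D) •
            (ContinuousLinearMap.proj (R := ℝ) (φ := fun _ : Fin 6 => ℝ) q)
        + (Real.sin (a p) * Real.sin (a r) * (nr / A0) / √D) •
            (ContinuousLinearMap.proj (R := ℝ) (φ := fun _ : Fin 6 => ℝ) r)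
        + (Real.sin (a p) * Real.sin (a s) * (ns / A1) / √D) •
            (ContinuousLinearMap.proj (R := ℝ) (φ := fun _ : Fin 6 => ℝ) s)
        + (Real.sin (a p) * Real.sin (a t) * (nt / A0) / √D) •
            (ContinuousLinearMap.proj (R := ℝ) (φ := fun _ : Fin 6 => ℝ) t)
        + (Real.sin (a p) * Real.sin (a u) * (nu / A1) / √D) •
            (ContinuousLinearMap.proj (R := ℝ) (φ := fun _ : Fin 6 => ℝ) u)) a := by
  have hc : ∀ e, HasFDerivAt (fun x => co x e)
      ((-Real.sin (a e)) • (ContinuousLinearMap.proj (R := ℝ) (φ := fun _ : Fin 6 => ℝ) e)) a := by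
    intro e
    exact (Real.hasDerivAt_cos (a e)).comp_hasFDerivAt a (hasFDerivAt_apply e a)
  have hc2 : ∀ e, HasFDerivAt (fun x => co x e ^ 2)
      ((2 * co a e) • ((-Real.sin (a e)) • (ContinuousLinearMap.proj (R := ℝ) (φ := fun _ : Fin 6 => ℝ) e))) a := by
    intro e
    have := (hasDerivAt_pow 2 (co a e)).comp_hasFDerivAt a (hc e)
    refine this.congr_fderiv ?_
    norm_num
  have dp := hc p
  have dq := hc q
  have dr := hc r
  have ds := hc s
  have dt := hc t
  have du := hc u
  have tr : ∀ x y z : Fin 6, HasFDerivAt (fun b => tri (co b x) (co b y) (co b z))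
      ((2 * (co a y * co a z + co a x)) • ((-Real.sin (a x)) • (ContinuousLinearMap.proj (R := ℝ) (φ := fun _ : Fin 6 => ℝ) x))
      + (2 * (co a x * co a z + co a y)) • ((-Real.sin (a y)) • (ContinuousLinearMap.proj (R := ℝ) (φ := fun _ : Fin 6 => ℝ) y))
      + (2 * (co a x * co a y + co a z)) • ((-Real.sin (a z)) • (ContinuousLinearMap.proj (R := ℝ) (φ := fun _ : Fin 6 => ℝ) z))) a := by
    intro x y z
    have := (((((((hc x).const_mul 2).fun_mul (hc y)).fun_mul (hc z)).fun_add (hc2 x)).fun_add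
      (hc2 y)).fun_add (hc2 z)).sub_const 1
    refine this.congr_fderiv ?_
    ext v
    simp
    ring
  have dN : HasFDerivAt (fun x => num (co x p) (co x q) (co x r) (co x s) (co x t) (co x u))
      ((co a r * co a u + co a s * co a t - 2 * co a p * co a q) • ((-Real.sin (a p)) • (ContinuousLinearMap.proj (R := ℝ) (φ := fun _ : Fin 6 => ℝ) p))
      + (1 - co a p ^ 2) • ((-Real.sin (a q)) • (ContinuousLinearMap.proj (R := ℝ) (φ := fun _ : Fin 6 => ℝ) q))
      + (co a s + co a p * co a u) • ((-Real.sin (a r)) • (ContinuousLinearMap.proj (R := ℝ) (φ := fun _ : Fin 6 => ℝ) r))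
      + (co a r + co a p * co a t) • ((-Real.sin (a s)) • (ContinuousLinearMap.proj (R := ℝ) (φ := fun _ : Fin 6 => ℝ) s))
      + (co a u + co a p * co a s) • ((-Real.sin (a t)) • (ContinuousLinearMap.proj (R := ℝ) (φ := fun _ : Fin 6 => ℝ) t))
      + (co a t + co a p * co a r) • ((-Real.sin (a u)) • (ContinuousLinearMap.proj (R := ℝ) (φ := fun _ : Fin 6 => ℝ) u))) a := by
    have := (((dr.fun_mul ds).fun_add (dt.fun_mul du)).fun_add
      (dp.fun_mul ((dr.fun_mul du).fun_add (ds.fun_mul dt)))).fun_add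
      (dq.fun_mul ((hc2 p).const_sub 1))
    refine this.congr_fderiv ?_
    ext v
    simp
    ring
  have dA0 := tr p r t
  have dA1 := tr p s u
  have hAA : 0 < A0 * A1 := mul_pos pA0 pA1
  have hsp : 1 - co a p ^ 2 = Real.sin (a p) ^ 2 := by
    have := Real.sin_sq_add_cos_sq (a p)
    unfold co; linarith
  have hJ := J1 (co a p) (co a q) (co a r) (co a s) (co a t) (co a u)
  rw [hA0, hA1, hN, hD, hsp] at hJ
  have hne : tri (co a p) (co a r) (co a t) * tri (co a p) (co a s) (co a u) ≠ 0 := by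
    rw [hA0, hA1]; exact hAA.ne'
  have dS := (dA0.fun_mul dA1).sqrt hne
  have hS0 : √(tri (co a p) (co a r) (co a t) * tri (co a p) (co a s) (co a u)) ≠ 0 := by
    rw [hA0, hA1]; exact (Real.sqrt_pos.mpr hAA).ne'
  have dQ := dN.fun_mul ((hasDerivAt_inv hS0).comp_hasFDerivAt a dS)
  set R := √(A0 * A1) with hR
  have hRp : 0 < R := Real.sqrt_pos.mpr hAA
  have hR2 : R ^ 2 = A0 * A1 := Real.sq_sqrt hAA.le
  have hq : (N / R) ^ 2 - 1 = D * Real.sin (a p) ^ 2 / (A0 * A1) := by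
    rw [div_pow, hR2, ← hJ]; field_simp
  have hgt : num (co a p) (co a q) (co a r) (co a s) (co a t) (co a u) /
      √(tri (co a p) (co a r) (co a t) * tri (co a p) (co a s) (co a u)) ∈ Ioi (1:ℝ) := by
    rw [hA0, hA1, hN]
    have h1 : 0 < (N / R) ^ 2 - 1 := by rw [hq]; positivity
    have h2 : 0 < N / R := by positivity
    show 1 < N / R
    nlinarith
  have hfin := (Real.hasDerivAt_arcosh hgt).comp_hasFDerivAt a dQ
  refine hfin.congr_fderiv ?_
  rw [hA0, hA1, hN, ← hR, hq]
  have hsq : √(D * Real.sin (a p) ^ 2 / (A0 * A1)) = √D * Real.sin (a p) / R := by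
    rw [Real.sqrt_div (by positivity), Real.sqrt_mul pD.le, Real.sqrt_sq ps.le]
  rw [hsq]
  have hDp : 0 < √D := Real.sqrt_pos.mpr pD
  have k1 := K1 (co a p) (co a q) (co a r) (co a s) (co a t) (co a u)
  have k2 : (co a u + co a p * co a s) * A0 - N * (co a t + co a p * co a r)
      = - (1 - co a p^2) * nt := by
    rw [← hA0, ← hN, ← hnt]; unfold num tri; ring
  have k3 : (co a r + co a p * co a t) * A1 - N * (co a s + co a p * co a u)
      = - (1 - co a p^2) * ns := by
    rw [← hA1, ← hN, ← hns]; unfold num tri; ring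
  have k4 : (co a t + co a p * co a r) * A1 - N * (co a u + co a p * co a s)
      = - (1 - co a p^2) * nu := by
    rw [← hA1, ← hN, ← hnu]; unfold num tri; ring
  rw [hA0, hN, hnr] at k1
  rw [hsp] at k1 k2 k3 k4
  have er : nr = -((co a s + co a p * co a u) * A0 - N * (co a r + co a p * co a t)) / Real.sin (a p)^2 := by
    rw [k1]; field_simp
  have et : nt = -((co a u + co a p * co a s) * A0 - N * (co a t + co a p * co a r)) / Real.sin (a p)^2 := by
    rw [k2]; field_simp
  have es : ns = -((co a r + co a p * co a t) * A1 - N * (co a s + co a p * co a u)) / Real.sin (a p)^2 := by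
    rw [k3]; field_simp
  have eu : nu = -((co a t + co a p * co a r) * A1 - N * (co a u + co a p * co a s)) / Real.sin (a p)^2 := by
    rw [k4]; field_simp
  rw [er, et, es, eu, hsp]
  clear_value R
  clear hfin dQ dS dN dA0 dA1 tr hc dp dq dr ds dt du k1 k2 k3 k4 er et es eu hq hgt hsq hJ hnr hnt hns hnu hS0 hne
  ext v
  simp
  rw [hA0, hA1, ← hR]
  clear hA0 hA1 hD hN hc2 hsp hR
  generalize √D = d at *
  generalize Real.sin (a p) = sp at *
  generalize Real.sin (a q) = sq at *
  generalize Real.sin (a r) = sr at *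
  generalize Real.sin (a s) = ss at *
  generalize Real.sin (a t) = st at *
  generalize Real.sin (a u) = su at *
  generalize co a p = cp at *
  generalize co a q = cq at *
  generalize co a r = cr at *
  generalize co a s = cs at *
  generalize co a t = ct at *
  generalize co a u = cu at *
  have hA1 : A1 = R ^ 2 / A0 := by rw [hR2]; field_simp
  subst hA1
  field_simp
  ring


noncomputable def Mdiag (p q r s t u A0 A1 N D : ℝ) : ℝ :=
  -(r * u + s * t - 2 * p * q - N * ((r * t + p) / A0 + (s * u + p) / A1)) / √D
noncomputable def Mopp (s s' D : ℝ) : ℝ := -(s * s') / √D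
noncomputable def Madj (s s' N A D : ℝ) : ℝ := s * s' * (N / A) / √D

/-- The Jacobian matrix of the edge lengths in terms of sines, cosines and `N, A, D`. -/
noncomputable def Mgen (s c N : Fin 6 → ℝ) (A : Fin 4 → ℝ) (D : ℝ) : Matrix (Fin 6) (Fin 6) ℝ :=
  ![![Mdiag (c 0) (c 5) (c 1) (c 3) (c 2) (c 4) (A 0) (A 1) (N 0) D,
    Madj (s 0) (s 1) (N 2) (A 0) D,
    Madj (s 0) (s 2) (N 1) (A 0) D,
    Madj (s 0) (s 3) (N 4) (A 1) D,
    Madj (s 0) (s 4) (N 3) (A 1) D,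
    Mopp (s 0) (s 5) D],
   ![Madj (s 1) (s 0) (N 2) (A 0) D,
    Mdiag (c 1) (c 4) (c 0) (c 3) (c 2) (c 5) (A 0) (A 2) (N 1) D,
    Madj (s 1) (s 2) (N 0) (A 0) D,
    Madj (s 1) (s 3) (N 5) (A 2) D,
    Mopp (s 1) (s 4) D,
    Madj (s 1) (s 5) (N 3) (A 2) D],
   ![Madj (s 2) (s 0) (N 1) (A 0) D,
    Madj (s 2) (s 1) (N 0) (A 0) D,
    Mdiag (c 2) (c 3) (c 0) (c 4) (c 1) (c 5) (A 0) (A 3) (N 2) D,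
    Mopp (s 2) (s 3) D,
    Madj (s 2) (s 4) (N 5) (A 3) D,
    Madj (s 2) (s 5) (N 4) (A 3) D],
   ![Madj (s 3) (s 0) (N 4) (A 1) D,
    Madj (s 3) (s 1) (N 5) (A 2) D,
    Mopp (s 3) (s 2) D,
    Mdiag (c 3) (c 2) (c 0) (c 1) (c 4) (c 5) (A 1) (A 2) (N 3) D,
    Madj (s 3) (s 4) (N 0) (A 1) D,
    Madj (s 3) (s 5) (N 1) (A 2) D],
   ![Madj (s 4) (s 0) (N 3) (A 1) D,
    Mopp (s 4) (s 1) D,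
    Madj (s 4) (s 2) (N 5) (A 3) D,
    Madj (s 4) (s 3) (N 0) (A 1) D,
    Mdiag (c 4) (c 1) (c 0) (c 2) (c 3) (c 5) (A 1) (A 3) (N 4) D,
    Madj (s 4) (s 5) (N 2) (A 3) D],
   ![Mopp (s 5) (s 0) D,
    Madj (s 5) (s 1) (N 3) (A 2) D,
    Madj (s 5) (s 2) (N 4) (A 3) D,
    Madj (s 5) (s 3) (N 1) (A 2) D,
    Madj (s 5) (s 4) (N 2) (A 3) D,
    Mdiag (c 5) (c 0) (c 1) (c 2) (c 3) (c 4) (A 2) (A 3) (N 5) D]]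

noncomputable def Mmat (a : Fin 6 → ℝ) : Matrix (Fin 6) (Fin 6) ℝ :=
  Mgen (fun e => Real.sin (a e)) (co a) (Nn (co a)) (An (co a)) (Dn (co a))

lemma Mmat_symm (a : Fin 6 → ℝ) (e f : Fin 6) : Mmat a e f = Mmat a f e := by
  unfold Mmat
  have h1 : ∀ x y z : ℝ, Mopp x y z = Mopp y x z := by intros; unfold Mopp; ring
  have h2 : ∀ x y z A D : ℝ, Madj x y z A D = Madj y x z A D := by intros; unfold Madj; ring
  fin_cases e <;> fin_cases f <;> first | rfl | exact h1 _ _ _ | exact h2 _ _ _ _ _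

set_option maxHeartbeats 2000000 in
lemma Lmap_deriv (a : Fin 6 → ℝ) (ha : a ∈ Bset) (e : Fin 6) :
    HasFDerivAt (fun x => Lmap x e)
      (∑ f, Mmat a e f • (ContinuousLinearMap.proj (R := ℝ) (φ := fun _ : Fin 6 => ℝ) f)) a := by
  obtain ⟨hN, hA, hD, hs⟩ := Bset_pos ha
  fin_cases e
  · refine (row 0 5 1 3 2 4 a (An (co a) 0) (An (co a) 1) (Dn (co a)) (Nn (co a) 0)
      (Nn (co a) 2) (Nn (co a) 4) (Nn (co a) 1) (Nn (co a) 3) (by simp [An, Nn, Dn, num, tri, Dl]; try ring1) (by simp [An, Nn, Dn, num, tri, Dl]; try ring1) (by simp [An, Nn, Dn, num, tri, Dl]; try ring1) (by simp [An, Nn, Dn, num, tri, Dl]; try ring1)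
      (by simp [An, Nn, Dn, num, tri, Dl]; try ring1) (by simp [An, Nn, Dn, num, tri, Dl]; try ring1) (by simp [An, Nn, Dn, num, tri, Dl]; try ring1) (by simp [An, Nn, Dn, num, tri, Dl]; try ring1) (hA _) (hA _) hD (hN _) (hs _)).congr_fderiv ?_
    unfold Mmat
    generalize Nn (co a) = N
    generalize An (co a) = A
    generalize Dn (co a) = D
    ext v
    simp [Fin.sum_univ_six, Mmat, Mgen, Mdiag, Mopp, Madj]
    ring1
  · refine (row 1 4 0 3 2 5 a (An (co a) 0) (An (co a) 2) (Dn (co a)) (Nn (co a) 1)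
      (Nn (co a) 2) (Nn (co a) 5) (Nn (co a) 0) (Nn (co a) 3) (by simp [An, Nn, Dn, num, tri, Dl]; try ring1) (by simp [An, Nn, Dn, num, tri, Dl]; try ring1) (by simp [An, Nn, Dn, num, tri, Dl]; try ring1) (by simp [An, Nn, Dn, num, tri, Dl]; try ring1)
      (by simp [An, Nn, Dn, num, tri, Dl]; try ring1) (by simp [An, Nn, Dn, num, tri, Dl]; try ring1) (by simp [An, Nn, Dn, num, tri, Dl]; try ring1) (by simp [An, Nn, Dn, num, tri, Dl]; try ring1) (hA _) (hA _) hD (hN _) (hs _)).congr_fderiv ?_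
    unfold Mmat
    generalize Nn (co a) = N
    generalize An (co a) = A
    generalize Dn (co a) = D
    ext v
    simp [Fin.sum_univ_six, Mmat, Mgen, Mdiag, Mopp, Madj]
    ring1
  · refine (row 2 3 0 4 1 5 a (An (co a) 0) (An (co a) 3) (Dn (co a)) (Nn (co a) 2)
      (Nn (co a) 1) (Nn (co a) 5) (Nn (co a) 0) (Nn (co a) 4) (by simp [An, Nn, Dn, num, tri, Dl]; try ring1) (by simp [An, Nn, Dn, num, tri, Dl]; try ring1) (by simp [An, Nn, Dn, num, tri, Dl]; try ring1) (by simp [An, Nn, Dn, num, tri, Dl]; try ring1)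
      (by simp [An, Nn, Dn, num, tri, Dl]; try ring1) (by simp [An, Nn, Dn, num, tri, Dl]; try ring1) (by simp [An, Nn, Dn, num, tri, Dl]; try ring1) (by simp [An, Nn, Dn, num, tri, Dl]; try ring1) (hA _) (hA _) hD (hN _) (hs _)).congr_fderiv ?_
    unfold Mmat
    generalize Nn (co a) = N
    generalize An (co a) = A
    generalize Dn (co a) = D
    ext v
    simp [Fin.sum_univ_six, Mmat, Mgen, Mdiag, Mopp, Madj]
    ring1
  · refine (row 3 2 0 1 4 5 a (An (co a) 1) (An (co a) 2) (Dn (co a)) (Nn (co a) 3)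
      (Nn (co a) 4) (Nn (co a) 5) (Nn (co a) 0) (Nn (co a) 1) (by simp [An, Nn, Dn, num, tri, Dl]; try ring1) (by simp [An, Nn, Dn, num, tri, Dl]; try ring1) (by simp [An, Nn, Dn, num, tri, Dl]; try ring1) (by simp [An, Nn, Dn, num, tri, Dl]; try ring1)
      (by simp [An, Nn, Dn, num, tri, Dl]; try ring1) (by simp [An, Nn, Dn, num, tri, Dl]; try ring1) (by simp [An, Nn, Dn, num, tri, Dl]; try ring1) (by simp [An, Nn, Dn, num, tri, Dl]; try ring1) (hA _) (hA _) hD (hN _) (hs _)).congr_fderiv ?_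
    unfold Mmat
    generalize Nn (co a) = N
    generalize An (co a) = A
    generalize Dn (co a) = D
    ext v
    simp [Fin.sum_univ_six, Mmat, Mgen, Mdiag, Mopp, Madj]
    ring1
  · refine (row 4 1 0 2 3 5 a (An (co a) 1) (An (co a) 3) (Dn (co a)) (Nn (co a) 4)
      (Nn (co a) 3) (Nn (co a) 5) (Nn (co a) 0) (Nn (co a) 2) (by simp [An, Nn, Dn, num, tri, Dl]; try ring1) (by simp [An, Nn, Dn, num, tri, Dl]; try ring1) (by simp [An, Nn, Dn, num, tri, Dl]; try ring1) (by simp [An, Nn, Dn, num, tri, Dl]; try ring1)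
      (by simp [An, Nn, Dn, num, tri, Dl]; try ring1) (by simp [An, Nn, Dn, num, tri, Dl]; try ring1) (by simp [An, Nn, Dn, num, tri, Dl]; try ring1) (by simp [An, Nn, Dn, num, tri, Dl]; try ring1) (hA _) (hA _) hD (hN _) (hs _)).congr_fderiv ?_
    unfold Mmat
    generalize Nn (co a) = N
    generalize An (co a) = A
    generalize Dn (co a) = D
    ext v
    simp [Fin.sum_univ_six, Mmat, Mgen, Mdiag, Mopp, Madj]
    ring1
  · refine (row 5 0 1 2 3 4 a (An (co a) 2) (An (co a) 3) (Dn (co a)) (Nn (co a) 5)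
      (Nn (co a) 3) (Nn (co a) 4) (Nn (co a) 1) (Nn (co a) 2) (by simp [An, Nn, Dn, num, tri, Dl]; try ring1) (by simp [An, Nn, Dn, num, tri, Dl]; try ring1) (by simp [An, Nn, Dn, num, tri, Dl]; try ring1) (by simp [An, Nn, Dn, num, tri, Dl]; try ring1)
      (by simp [An, Nn, Dn, num, tri, Dl]; try ring1) (by simp [An, Nn, Dn, num, tri, Dl]; try ring1) (by simp [An, Nn, Dn, num, tri, Dl]; try ring1) (by simp [An, Nn, Dn, num, tri, Dl]; try ring1) (hA _) (hA _) hD (hN _) (hs _)).congr_fderiv ?_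
    unfold Mmat
    generalize Nn (co a) = N
    generalize An (co a) = A
    generalize Dn (co a) = D
    ext v
    simp [Fin.sum_univ_six, Mmat, Mgen, Mdiag, Mopp, Madj]
    ring1


lemma gram_inj (H X W dX m : Matrix (Fin 4) (Fin 4) ℝ) (μ : Fin 4 → ℝ) (δ d : ℝ) (hδ : δ ≠ 0)
    (h1 : H * X = δ • 1) (h2 : X * H = δ • 1) (h3 : -(W * X) + H * dX = d • 1)
    (h4 : dX = m * X + X * m) (hm : m = Matrix.diagonal μ)
    (hH : ∀ i, H i i = 1) (hW : ∀ i, W i i = 0) : W = 0 := by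
  have e1 : (-(W * X) + H * dX) * H = d • H := by rw [h3]; simp
  have e2 : (-(W * X) + H * dX) * H = -(δ • W) + δ • (H * m) + δ • (m * H) := by
    have : (-(W * X) + H * dX) * H = -(W * (X * H)) + H * m * (X * H) + (H * X) * m * H := by
      rw [h4]; noncomm_ring
    rw [this, h1, h2]
    simp
  rw [e1] at e2
  have e3 : ∀ i j, d * H i j = -(δ * W i j) + δ * (H i j * μ j) + δ * (μ i * H i j) := by
    intro i j
    have := congrFun (congrFun e2 i) j
    rw [hm] at this
    simpa [Matrix.mul_diagonal, Matrix.diagonal_mul] using this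
  have e4 : ∀ i, 2 * δ * μ i = d := by
    intro i
    have := e3 i i
    rw [hH, hW] at this
    linarith
  ext i j
  have h := e3 i j
  have a1 := e4 i
  have a2 := e4 j
  have : δ * W i j = 0 := by
    have : δ * W i j = H i j * ((2 * δ * μ i - d) / 2 + (2 * δ * μ j - d) / 2) := by linarith
    rw [this, a1, a2]; ring
  simpa [hδ] using this

def dnum (p q r s t u wp wq wr ws wt wu : ℝ) : ℝ :=
  (r*u+s*t-2*p*q)*wp + (1-p^2)*wq + (s+p*u)*wr + (r+p*t)*ws + (u+p*s)*wt + (t+p*r)*wu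
def dtri (x y z wx wy wz : ℝ) : ℝ := 2*((y*z+x)*wx + (x*z+y)*wy + (x*y+z)*wz)

lemma rowzero (p q r s t u A0 A1 D N nr ns nt nu sp sq sr ss st su vp vq vr vs vt vu : ℝ)
    (hA0 : tri p r t = A0) (hA1 : tri p s u = A1) (hN : num p q r s t u = N)
    (hnr : num t s p u r q = nr) (hnt : num r u p s t q = nt)
    (hns : num u r p t s q = ns) (hnu : num s t p r u q = nu)
    (pA0 : 0 < A0) (pA1 : 0 < A1) (pD : 0 < D) (hsp : 1 - p ^ 2 = sp ^ 2)
    (h : Mdiag p q r s t u A0 A1 N D * vp + Mopp sp sq D * vq + Madj sp sr nr A0 D * vr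
      + Madj sp ss ns A1 D * vs + Madj sp st nt A0 D * vt + Madj sp su nu A1 D * vu = 0) :
    dnum p q r s t u (sp*vp) (sq*vq) (sr*vr) (ss*vs) (st*vt) (su*vu)
      = N * (dtri p r t (sp*vp) (sr*vr) (st*vt) / (2*A0) + dtri p s u (sp*vp) (ss*vs) (su*vu) / (2*A1)) := by
  have hDp : 0 < √D := Real.sqrt_pos.mpr pD
  have k1 := K1 p q r s t u
  have k2 : (u + p * s) * A0 - N * (t + p * r) = - (1 - p^2) * nt := by
    rw [← hA0, ← hN, ← hnt]; unfold num tri; ring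
  have k3 : (r + p * t) * A1 - N * (s + p * u) = - (1 - p^2) * ns := by
    rw [← hA1, ← hN, ← hns]; unfold num tri; ring
  have k4 : (t + p * r) * A1 - N * (u + p * s) = - (1 - p^2) * nu := by
    rw [← hA1, ← hN, ← hnu]; unfold num tri; ring
  rw [hA0, hN, hnr] at k1
  unfold Mdiag Mopp Madj at h
  generalize √D = d at *
  clear hA0 hA1 hN hnr hnt hns hnu
  have h' : (-((r * u + s * t - 2 * p * q - N * ((r * t + p) / A0 + (s * u + p) / A1))) * vp
     - sp * sq * vq + sp * sr * (nr / A0) * vr + sp * ss * (ns / A1) * vs + sp * st * (nt / A0) * vt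
     + sp * su * (nu / A1) * vu) = 0 := by
    field_simp at h
    field_simp
    linarith
  have h2 : sp * (-((r * u + s * t - 2 * p * q - N * ((r * t + p) / A0 + (s * u + p) / A1))) * vp)
     - sp ^ 2 * sq * vq + sr * ((sp ^ 2 * nr) / A0) * vr + ss * ((sp^2 * ns) / A1) * vs
     + st * ((sp ^ 2 * nt) / A0) * vt
     + su * ((sp ^ 2 * nu) / A1) * vu = 0 := by
    linear_combination sp * h'
  rw [hsp] at k1 k2 k3 k4
  rw [show sp ^ 2 * nr = -((s + p * u) * A0 - N * (r + p * t)) by linarith,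
    show sp ^ 2 * ns = -((r + p * t) * A1 - N * (s + p * u)) by linarith,
    show sp ^ 2 * nt = -((u + p * s) * A0 - N * (t + p * r)) by linarith,
    show sp ^ 2 * nu = -((t + p * r) * A1 - N * (u + p * s)) by linarith, ← hsp] at h2
  unfold dnum dtri
  field_simp at h2 ⊢
  linear_combination (-1) * h2

def dNn (c w : Fin 6 → ℝ) : Fin 6 → ℝ :=
  ![dnum (c 0) (c 5) (c 1) (c 3) (c 2) (c 4)
      (w 0) (w 5) (w 1) (w 3) (w 2) (w 4),
    dnum (c 1) (c 4) (c 0) (c 3) (c 2) (c 5)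
      (w 1) (w 4) (w 0) (w 3) (w 2) (w 5),
    dnum (c 2) (c 3) (c 0) (c 4) (c 1) (c 5)
      (w 2) (w 3) (w 0) (w 4) (w 1) (w 5),
    dnum (c 3) (c 2) (c 0) (c 1) (c 4) (c 5)
      (w 3) (w 2) (w 0) (w 1) (w 4) (w 5),
    dnum (c 4) (c 1) (c 0) (c 2) (c 3) (c 5)
      (w 4) (w 1) (w 0) (w 2) (w 3) (w 5),
    dnum (c 5) (c 0) (c 1) (c 2) (c 3) (c 4)
      (w 5) (w 0) (w 1) (w 2) (w 3) (w 4)]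
def dAn (c w : Fin 6 → ℝ) : Fin 4 → ℝ :=
  ![dtri (c 0) (c 1) (c 2) (w 0) (w 1) (w 2),
    dtri (c 0) (c 3) (c 4) (w 0) (w 3) (w 4),
    dtri (c 1) (c 3) (c 5) (w 1) (w 3) (w 5),
    dtri (c 2) (c 4) (c 5) (w 2) (w 4) (w 5)]

def Hm (c : Fin 6 → ℝ) : Matrix (Fin 4) (Fin 4) ℝ :=
  !![1, -c 5, -c 4, -c 3; -c 5, 1, -c 2, -c 1; -c 4, -c 2, 1, -c 0; -c 3, -c 1, -c 0, 1]
def Wm (w : Fin 6 → ℝ) : Matrix (Fin 4) (Fin 4) ℝ :=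
  !![0, w 5, w 4, w 3; w 5, 0, w 2, w 1; w 4, w 2, 0, w 0; w 3, w 1, w 0, 0]
def Xm (N : Fin 6 → ℝ) (A : Fin 4 → ℝ) : Matrix (Fin 4) (Fin 4) ℝ :=
  !![-A 0, N 0, N 1, N 2; N 0, -A 1, N 3, N 4; N 1, N 3, -A 2, N 5; N 2, N 4, N 5, -A 3]

lemma HX (c : Fin 6 → ℝ) : Hm c * Xm (Nn c) (An c) = (-Dn c) • 1 := by
  ext i j
  fin_cases i <;> fin_cases j <;>
    simp [Hm, Xm, Matrix.mul_apply, Fin.sum_univ_four, Nn, An, Dn, num, tri, Dl] <;> ring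
lemma Hm_symm (c : Fin 6 → ℝ) : (Hm c)ᵀ = Hm c := by
  ext i j; fin_cases i <;> fin_cases j <;> rfl
lemma Xm_symm (N : Fin 6 → ℝ) (A : Fin 4 → ℝ) : (Xm N A)ᵀ = Xm N A := by
  ext i j; fin_cases i <;> fin_cases j <;> rfl
lemma XH (c : Fin 6 → ℝ) : Xm (Nn c) (An c) * Hm c = (-Dn c) • 1 := by
  have := congrArg Matrix.transpose (HX c)
  rw [Matrix.transpose_mul, Hm_symm, Xm_symm] at this
  rw [this]; simp
set_option maxHeartbeats 2000000 in
lemma dHX (c w : Fin 6 → ℝ) : -(Wm w * Xm (Nn c) (An c)) + Hm c * Xm (dNn c w) (dAn c w) =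
    ((-(Wm w * Xm (Nn c) (An c)) + Hm c * Xm (dNn c w) (dAn c w)) 0 0) • 1 := by
  ext i j
  fin_cases i <;> fin_cases j <;>
    simp [Hm, Xm, Wm, Matrix.mul_apply, Fin.sum_univ_four, Nn, An, dNn, dAn, num, tri, dnum, dtri] <;> ring

set_option maxHeartbeats 2000000 in
lemma Mmat_inj (a : Fin 6 → ℝ) (ha : a ∈ Bset) (v : Fin 6 → ℝ) (hv : Mmat a *ᵥ v = 0) : v = 0 := by
  obtain ⟨hN, hA, hD, hs⟩ := Bset_pos ha
  set w : Fin 6 → ℝ := fun e => Real.sin (a e) * v e with hw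
  set μ : Fin 4 → ℝ := fun i => dAn (co a) w i / (2 * An (co a) i) with hμ
  have hsc : ∀ e, 1 - co a e ^ 2 = Real.sin (a e) ^ 2 := by
    intro e
    have := Real.sin_sq_add_cos_sq (a e)
    unfold co; linarith
  have r0 : dNn (co a) w 0 = Nn (co a) 0 * (μ 0 + μ 1) := by
    have := rowzero (co a 0) (co a 5) (co a 1) (co a 3) (co a 2) (co a 4)
      (An (co a) 0) (An (co a) 1) (Dn (co a)) (Nn (co a) 0)
      (Nn (co a) 2) (Nn (co a) 4) (Nn (co a) 1) (Nn (co a) 3)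
      (Real.sin (a 0)) (Real.sin (a 5)) (Real.sin (a 1)) (Real.sin (a 3)) (Real.sin (a 2)) (Real.sin (a 4))
      (v 0) (v 5) (v 1) (v 3) (v 2) (v 4) (by simp [An, Nn, num, tri]; try ring1) (by simp [An, Nn, num, tri]; try ring1) (by simp [An, Nn, num, tri]; try ring1) (by simp [An, Nn, num, tri]; try ring1)
      (by simp [An, Nn, num, tri]; try ring1) (by simp [An, Nn, num, tri]; try ring1) (by simp [An, Nn, num, tri]; try ring1) (hA _) (hA _) hD (hsc _) (by
        have h := congrFun hv 0
        simp only [Matrix.mulVec, dotProduct, Fin.sum_univ_six, Pi.zero_apply] at h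
        rw [← h]
        simp [Mmat, Mgen]
        ring1)
    have x1 : dAn (co a) w 0 = dtri (co a 0) (co a 1) (co a 2) (w 0) (w 1) (w 2) := by
      simp [dAn, dtri]; try ring1
    have x2 : dAn (co a) w 1 = dtri (co a 0) (co a 3) (co a 4) (w 0) (w 3) (w 4) := by
      simp [dAn, dtri]; try ring1
    simp only [hμ]
    rw [x1, x2]
    exact this
  have r1 : dNn (co a) w 1 = Nn (co a) 1 * (μ 0 + μ 2) := by
    have := rowzero (co a 1) (co a 4) (co a 0) (co a 3) (co a 2) (co a 5)
      (An (co a) 0) (An (co a) 2) (Dn (co a)) (Nn (co a) 1)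
      (Nn (co a) 2) (Nn (co a) 5) (Nn (co a) 0) (Nn (co a) 3)
      (Real.sin (a 1)) (Real.sin (a 4)) (Real.sin (a 0)) (Real.sin (a 3)) (Real.sin (a 2)) (Real.sin (a 5))
      (v 1) (v 4) (v 0) (v 3) (v 2) (v 5) (by simp [An, Nn, num, tri]; try ring1) (by simp [An, Nn, num, tri]; try ring1) (by simp [An, Nn, num, tri]; try ring1) (by simp [An, Nn, num, tri]; try ring1)
      (by simp [An, Nn, num, tri]; try ring1) (by simp [An, Nn, num, tri]; try ring1) (by simp [An, Nn, num, tri]; try ring1) (hA _) (hA _) hD (hsc _) (by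
        have h := congrFun hv 1
        simp only [Matrix.mulVec, dotProduct, Fin.sum_univ_six, Pi.zero_apply] at h
        rw [← h]
        simp [Mmat, Mgen]
        ring1)
    have x1 : dAn (co a) w 0 = dtri (co a 1) (co a 0) (co a 2) (w 1) (w 0) (w 2) := by
      simp [dAn, dtri]; try ring1
    have x2 : dAn (co a) w 2 = dtri (co a 1) (co a 3) (co a 5) (w 1) (w 3) (w 5) := by
      simp [dAn, dtri]; try ring1
    simp only [hμ]
    rw [x1, x2]
    exact this
  have r2 : dNn (co a) w 2 = Nn (co a) 2 * (μ 0 + μ 3) := by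
    have := rowzero (co a 2) (co a 3) (co a 0) (co a 4) (co a 1) (co a 5)
      (An (co a) 0) (An (co a) 3) (Dn (co a)) (Nn (co a) 2)
      (Nn (co a) 1) (Nn (co a) 5) (Nn (co a) 0) (Nn (co a) 4)
      (Real.sin (a 2)) (Real.sin (a 3)) (Real.sin (a 0)) (Real.sin (a 4)) (Real.sin (a 1)) (Real.sin (a 5))
      (v 2) (v 3) (v 0) (v 4) (v 1) (v 5) (by simp [An, Nn, num, tri]; try ring1) (by simp [An, Nn, num, tri]; try ring1) (by simp [An, Nn, num, tri]; try ring1) (by simp [An, Nn, num, tri]; try ring1)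
      (by simp [An, Nn, num, tri]; try ring1) (by simp [An, Nn, num, tri]; try ring1) (by simp [An, Nn, num, tri]; try ring1) (hA _) (hA _) hD (hsc _) (by
        have h := congrFun hv 2
        simp only [Matrix.mulVec, dotProduct, Fin.sum_univ_six, Pi.zero_apply] at h
        rw [← h]
        simp [Mmat, Mgen]
        ring1)
    have x1 : dAn (co a) w 0 = dtri (co a 2) (co a 0) (co a 1) (w 2) (w 0) (w 1) := by
      simp [dAn, dtri]; try ring1
    have x2 : dAn (co a) w 3 = dtri (co a 2) (co a 4) (co a 5) (w 2) (w 4) (w 5) := by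
      simp [dAn, dtri]; try ring1
    simp only [hμ]
    rw [x1, x2]
    exact this
  have r3 : dNn (co a) w 3 = Nn (co a) 3 * (μ 1 + μ 2) := by
    have := rowzero (co a 3) (co a 2) (co a 0) (co a 1) (co a 4) (co a 5)
      (An (co a) 1) (An (co a) 2) (Dn (co a)) (Nn (co a) 3)
      (Nn (co a) 4) (Nn (co a) 5) (Nn (co a) 0) (Nn (co a) 1)
      (Real.sin (a 3)) (Real.sin (a 2)) (Real.sin (a 0)) (Real.sin (a 1)) (Real.sin (a 4)) (Real.sin (a 5))
      (v 3) (v 2) (v 0) (v 1) (v 4) (v 5) (by simp [An, Nn, num, tri]; try ring1) (by simp [An, Nn, num, tri]; try ring1) (by simp [An, Nn, num, tri]; try ring1) (by simp [An, Nn, num, tri]; try ring1)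
      (by simp [An, Nn, num, tri]; try ring1) (by simp [An, Nn, num, tri]; try ring1) (by simp [An, Nn, num, tri]; try ring1) (hA _) (hA _) hD (hsc _) (by
        have h := congrFun hv 3
        simp only [Matrix.mulVec, dotProduct, Fin.sum_univ_six, Pi.zero_apply] at h
        rw [← h]
        simp [Mmat, Mgen]
        ring1)
    have x1 : dAn (co a) w 1 = dtri (co a 3) (co a 0) (co a 4) (w 3) (w 0) (w 4) := by
      simp [dAn, dtri]; try ring1
    have x2 : dAn (co a) w 2 = dtri (co a 3) (co a 1) (co a 5) (w 3) (w 1) (w 5) := by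
      simp [dAn, dtri]; try ring1
    simp only [hμ]
    rw [x1, x2]
    exact this
  have r4 : dNn (co a) w 4 = Nn (co a) 4 * (μ 1 + μ 3) := by
    have := rowzero (co a 4) (co a 1) (co a 0) (co a 2) (co a 3) (co a 5)
      (An (co a) 1) (An (co a) 3) (Dn (co a)) (Nn (co a) 4)
      (Nn (co a) 3) (Nn (co a) 5) (Nn (co a) 0) (Nn (co a) 2)
      (Real.sin (a 4)) (Real.sin (a 1)) (Real.sin (a 0)) (Real.sin (a 2)) (Real.sin (a 3)) (Real.sin (a 5))
      (v 4) (v 1) (v 0) (v 2) (v 3) (v 5) (by simp [An, Nn, num, tri]; try ring1) (by simp [An, Nn, num, tri]; try ring1) (by simp [An, Nn, num, tri]; try ring1) (by simp [An, Nn, num, tri]; try ring1)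
      (by simp [An, Nn, num, tri]; try ring1) (by simp [An, Nn, num, tri]; try ring1) (by simp [An, Nn, num, tri]; try ring1) (hA _) (hA _) hD (hsc _) (by
        have h := congrFun hv 4
        simp only [Matrix.mulVec, dotProduct, Fin.sum_univ_six, Pi.zero_apply] at h
        rw [← h]
        simp [Mmat, Mgen]
        ring1)
    have x1 : dAn (co a) w 1 = dtri (co a 4) (co a 0) (co a 3) (w 4) (w 0) (w 3) := by
      simp [dAn, dtri]; try ring1
    have x2 : dAn (co a) w 3 = dtri (co a 4) (co a 2) (co a 5) (w 4) (w 2) (w 5) := by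
      simp [dAn, dtri]; try ring1
    simp only [hμ]
    rw [x1, x2]
    exact this
  have r5 : dNn (co a) w 5 = Nn (co a) 5 * (μ 2 + μ 3) := by
    have := rowzero (co a 5) (co a 0) (co a 1) (co a 2) (co a 3) (co a 4)
      (An (co a) 2) (An (co a) 3) (Dn (co a)) (Nn (co a) 5)
      (Nn (co a) 3) (Nn (co a) 4) (Nn (co a) 1) (Nn (co a) 2)
      (Real.sin (a 5)) (Real.sin (a 0)) (Real.sin (a 1)) (Real.sin (a 2)) (Real.sin (a 3)) (Real.sin (a 4))
      (v 5) (v 0) (v 1) (v 2) (v 3) (v 4) (by simp [An, Nn, num, tri]; try ring1) (by simp [An, Nn, num, tri]; try ring1) (by simp [An, Nn, num, tri]; try ring1) (by simp [An, Nn, num, tri]; try ring1)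
      (by simp [An, Nn, num, tri]; try ring1) (by simp [An, Nn, num, tri]; try ring1) (by simp [An, Nn, num, tri]; try ring1) (hA _) (hA _) hD (hsc _) (by
        have h := congrFun hv 5
        simp only [Matrix.mulVec, dotProduct, Fin.sum_univ_six, Pi.zero_apply] at h
        rw [← h]
        simp [Mmat, Mgen]
        ring1)
    have x1 : dAn (co a) w 2 = dtri (co a 5) (co a 1) (co a 3) (w 5) (w 1) (w 3) := by
      simp [dAn, dtri]; try ring1
    have x2 : dAn (co a) w 3 = dtri (co a 5) (co a 2) (co a 4) (w 5) (w 2) (w 4) := by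
      simp [dAn, dtri]; try ring1
    simp only [hμ]
    rw [x1, x2]
    exact this
  have hW := gram_inj (Hm (co a)) (Xm (Nn (co a)) (An (co a))) (Wm w) (Xm (dNn (co a) w) (dAn (co a) w))
    (Matrix.diagonal μ) μ _ _ (neg_ne_zero.mpr hD.ne') (HX _) (XH _) (dHX _ _) (by
      have hμA : ∀ i, dAn (co a) w i = 2 * An (co a) i * μ i := by
        intro i
        have := (hA i).ne'
        simp only [hμ]; field_simp
      ext i j
      simp only [Matrix.add_apply, Matrix.mul_diagonal, Matrix.diagonal_mul]
      fin_cases i <;> fin_cases j <;> simp [Xm, r0, r1, r2, r3, r4, r5, hμA] <;> ring1) rfl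
      (by intro i; fin_cases i <;> rfl) (by intro i; fin_cases i <;> rfl)
  have hw0 : ∀ e, w e = 0 := by
    intro e
    fin_cases e
    · exact congrFun (congrFun hW 2) 3
    · exact congrFun (congrFun hW 1) 3
    · exact congrFun (congrFun hW 1) 2
    · exact congrFun (congrFun hW 0) 3
    · exact congrFun (congrFun hW 0) 2
    · exact congrFun (congrFun hW 0) 1
  funext e
  have := hw0 e
  simpa [hw, (hs e).ne'] using this


lemma co_cont (e : Fin 6) : Continuous fun a => co a e := by unfold co; fun_prop
lemma Nn_cont (e : Fin 6) : Continuous fun a => Nn (co a) e := by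
  have h := co_cont
  fin_cases e <;> simp only [Nn, num] <;> simp <;> fun_prop
lemma An_cont (v : Fin 4) : Continuous fun a => An (co a) v := by
  have h := co_cont
  fin_cases v <;> simp only [An, tri] <;> simp <;> fun_prop
lemma Dn_cont : Continuous fun a => Dn (co a) := by
  have h := co_cont
  simp only [Dn, Dl]; fun_prop

lemma Mmat_cont : ContinuousOn Mmat Bset := by
  have hs : ∀ e, Continuous fun a : Fin 6 → ℝ => Real.sin (a e) := fun e => by fun_prop
  have key : ∀ e f, ContinuousOn (fun a => Mmat a e f) Bset := by
    have h1 : ∀ e f, ContinuousOn (fun a : Fin 6 → ℝ => Mopp (Real.sin (a e)) (Real.sin (a f)) (Dn (co a))) Bset := by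
      intro e f
      refine ContinuousOn.div ((hs e).mul (hs f)).neg.continuousOn (Dn_cont.sqrt).continuousOn ?_
      intro a ha
      exact (Real.sqrt_pos.mpr (Bset_pos ha).2.2.1).ne'
    have h2 : ∀ e f g v, ContinuousOn (fun a : Fin 6 → ℝ => Madj (Real.sin (a e)) (Real.sin (a f))
        (Nn (co a) g) (An (co a) v) (Dn (co a))) Bset := by
      intro e f g v
      refine ContinuousOn.div (((hs e).mul (hs f)).continuousOn.mul
        ((Nn_cont g).continuousOn.div (An_cont v).continuousOn ?_)) (Dn_cont.sqrt).continuousOn ?_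
      · intro a ha
        exact ((Bset_pos ha).2.1 v).ne'
      · intro a ha
        exact (Real.sqrt_pos.mpr (Bset_pos ha).2.2.1).ne'
    have h3 : ∀ p q r s t u v v', ContinuousOn (fun a : Fin 6 → ℝ => Mdiag (co a p) (co a q) (co a r) (co a s) (co a t) (co a u)
        (An (co a) v) (An (co a) v') (Nn (co a) p) (Dn (co a))) Bset := by
      intro p q r s t u v v'
      have h := co_cont
      refine ContinuousOn.div (ContinuousOn.neg (ContinuousOn.sub (Continuous.continuousOn (by fun_prop))
        ((Nn_cont p).continuousOn.mul (ContinuousOn.add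
          (ContinuousOn.div (Continuous.continuousOn (by fun_prop)) (An_cont v).continuousOn ?_)
          (ContinuousOn.div (Continuous.continuousOn (by fun_prop)) (An_cont v').continuousOn ?_)))))
          (Dn_cont.sqrt).continuousOn ?_
      · intro a ha
        exact ((Bset_pos ha).2.1 v).ne'
      · intro a ha
        exact ((Bset_pos ha).2.1 v').ne'
      · intro a ha
        exact (Real.sqrt_pos.mpr (Bset_pos ha).2.2.1).ne'
    intro e f
    fin_cases e <;> fin_cases f <;>
      first | exact h1 _ _ | exact h2 _ _ _ _ | exact h3 _ _ _ _ _ _ _ _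
  exact continuousOn_pi.2 fun e => continuousOn_pi.2 fun f => key e f

noncomputable def aBase : Fin 6 → ℝ := fun _ => Real.arccos (3 / 5)

lemma aBase_mem : aBase ∈ Bset := by
  have h0 : 0 < Real.arccos (3/5) := Real.arccos_pos.mpr (by norm_num)
  have h1 : Real.arccos (3/5) < Real.pi / 3 := by
    by_contra h
    push Not at h
    have := Real.cos_le_cos_of_nonneg_of_le_pi (by positivity) (Real.arccos_le_pi _) h
    rw [Real.cos_arccos (by norm_num) (by norm_num), Real.cos_pi_div_three] at this
    norm_num at this
  refine ⟨fun e => h0, ?_, ?_, ?_, ?_⟩ <;> unfold aBase <;> linarith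

lemma aBase_psd (v : Fin 6 → ℝ) : 0 ≤ v ⬝ᵥ (Mmat aBase *ᵥ v) := by
  have hc : co aBase = fun _ => 3/5 := by
    funext e
    exact Real.cos_arccos (by norm_num) (by norm_num)
  have hs : ∀ e, Real.sin (aBase e) = 4/5 := by
    intro e
    unfold aBase
    rw [Real.sin_arccos, show (1 - (3/5:ℝ)^2) = (4/5)^2 by norm_num]
    exact Real.sqrt_sq (by norm_num)
  have hN : Nn (co aBase) = fun _ => 192/125 := by
    rw [hc]; funext e; fin_cases e <;> simp [Nn, num] <;> norm_num
  have hA : An (co aBase) = fun _ => 64/125 := by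
    rw [hc]; funext e; fin_cases e <;> simp [An, tri] <;> norm_num
  unfold Mmat
  simp only [hs]
  rw [hN, hA, hc]
  have hk : 0 ≤ (√(Dn fun _ => 3/5))⁻¹ := by positivity
  unfold Mgen Mdiag Mopp Madj
  simp only [div_eq_mul_inv _ (√(Dn fun _ => 3/5))]
  generalize (√(Dn fun _ => 3/5))⁻¹ = k at *
  have : v ⬝ᵥ (Mgen (fun _ => 4/5) (fun _ => 3/5) (fun _ => 192/125) (fun _ => 64/125) 0 *ᵥ v) = 0 := by
    simp [Mgen, Mdiag, Mopp, Madj, dotProduct, Matrix.mulVec, Fin.sum_univ_six]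
  simp [dotProduct, Matrix.mulVec, Fin.sum_univ_six]
  have h : 0 ≤ k * (16/25) * (5 * ((v 0 - v 5)^2 + (v 1 - v 4)^2 + (v 2 - v 3)^2)
    + ((v 0 + v 5)^2 + (v 1 + v 4)^2 + (v 2 + v 3)^2) + 3 * (v 0 + v 1 + v 2 + v 3 + v 4 + v 5)^2) := by positivity
  linear_combination h

lemma exists_V : ∃ V : (Fin 6 → ℝ) → ℝ, ∀ a ∈ Bset, ∀ b ∈ Bset,
    V a + ∑ e, Lmap a e * (b e - a e) ≤ V b :=
  potential Bset Bset_open Bset_convex Lmap Mmat Lmap_deriv (fun a _ => Mmat_symm a)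
    (psd_of_connected Bset Bset_open Bset_convex.isPreconnected Mmat Mmat_cont
      (fun a _ => Mmat_symm a) Mmat_inj aBase aBase_mem aBase_psd)


/-- Numerators, face quantities and determinant in terms of hyperbolic cosines. -/
def Cn (c : Fin 6 → ℝ) : Fin 6 → ℝ :=
  ![num (c 0) (c 5) (c 1) (c 2) (c 3) (c 4),
    num (c 1) (c 4) (c 0) (c 2) (c 3) (c 5),
    num (c 2) (c 3) (c 0) (c 1) (c 4) (c 5),
    num (c 3) (c 2) (c 0) (c 4) (c 1) (c 5),
    num (c 4) (c 1) (c 0) (c 3) (c 2) (c 5),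
    num (c 5) (c 0) (c 1) (c 3) (c 2) (c 4)]
def Bn (c : Fin 6 → ℝ) : Fin 4 → ℝ :=
  ![tri (c 3) (c 4) (c 5), tri (c 1) (c 2) (c 5), tri (c 0) (c 2) (c 4), tri (c 0) (c 1) (c 3)]
def Dc (c : Fin 6 → ℝ) : ℝ := Dl (c 0) (c 5) (c 1) (c 2) (c 3) (c 4)
/-- The cosines of the angles. -/
noncomputable def Xc (c : Fin 6 → ℝ) : Fin 6 → ℝ :=
  ![Cn c 0 / (√(Bn c 2) * √(Bn c 3)),
    Cn c 1 / (√(Bn c 1) * √(Bn c 3)),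
    Cn c 2 / (√(Bn c 1) * √(Bn c 2)),
    Cn c 3 / (√(Bn c 0) * √(Bn c 3)),
    Cn c 4 / (√(Bn c 0) * √(Bn c 2)),
    Cn c 5 / (√(Bn c 0) * √(Bn c 1))]

lemma Bn_pos (c : Fin 6 → ℝ) (hc : ∀ e, 1 ≤ c e) (v : Fin 4) : 0 < Bn c v := by
  have key : ∀ x y z : ℝ, 1 ≤ x → 1 ≤ y → 1 ≤ z → 0 < tri x y z := by
    intro x y z hx hy hz
    unfold tri
    have : 0 < 2 * x * y * z := by positivity
    nlinarith
  fin_cases v <;> exact key _ _ _ (hc _) (hc _) (hc _)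

lemma starfun (bj bk bh D Np Nr Ns q r s : ℝ) (hj : 0 < bj) (hk : 0 < bk) (hh : 0 < bh) (hD : 0 < D)
    (hq : 1 < q) (hr : 1 < r) (hs : 1 < s)
    (h3 : Np * bj + Nr * Ns = D * (q + r * s))
    (h1 : Nr ^ 2 - bj * bh = D * (1 - r ^ 2)) (h2 : Ns ^ 2 - bj * bk = D * (1 - s ^ 2)) :
    √(1 - (Nr / (√bj * √bh)) ^ 2) * √(1 - (Ns / (√bj * √bk)) ^ 2) <
      Np / (√bk * √bh) + Nr / (√bj * √bh) * (Ns / (√bj * √bk)) := by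
  obtain ⟨x, hx, rfl⟩ : ∃ x, 0 < x ∧ bj = x ^ 2 := ⟨√bj, Real.sqrt_pos.2 hj, (Real.sq_sqrt hj.le).symm⟩
  obtain ⟨y, hy, rfl⟩ : ∃ x, 0 < x ∧ bk = x ^ 2 := ⟨√bk, Real.sqrt_pos.2 hk, (Real.sq_sqrt hk.le).symm⟩
  obtain ⟨z, hz, rfl⟩ : ∃ x, 0 < x ∧ bh = x ^ 2 := ⟨√bh, Real.sqrt_pos.2 hh, (Real.sq_sqrt hh.le).symm⟩
  rw [Real.sqrt_sq hx.le, Real.sqrt_sq hy.le, Real.sqrt_sq hz.le]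
  have e1 : 1 - (Nr / (x * z)) ^ 2 = D * (r ^ 2 - 1) / (x * z) ^ 2 := by
    field_simp; linarith
  have e2 : 1 - (Ns / (x * y)) ^ 2 = D * (s ^ 2 - 1) / (x * y) ^ 2 := by
    field_simp; linarith
  have e3 : Np / (y * z) + Nr / (x * z) * (Ns / (x * y)) = D * (q + r * s) / (x ^ 2 * y * z) := by
    rw [← h3]; field_simp
  have hr2 : 0 < r ^ 2 - 1 := by nlinarith
  have hs2 : 0 < s ^ 2 - 1 := by nlinarith
  rw [e1, e2, e3, ← Real.sqrt_mul (by positivity), Real.sqrt_lt' (by positivity)]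
  have : D * (r ^ 2 - 1) / (x * z) ^ 2 * (D * (s ^ 2 - 1) / (x * y) ^ 2) =
    D ^ 2 * ((r ^ 2 - 1) * (s ^ 2 - 1)) / (x ^ 2 * y * z) ^ 2 := by field_simp
  rw [this, div_pow, mul_pow D]
  have : 0 < r * s := by positivity
  gcongr
  nlinarith [mul_pos (zero_lt_one.trans hr) (zero_lt_one.trans hs)]

lemma star_lt (α β γ : ℝ) (ha : 0 < α) (hb : 0 < β) (ha' : α < Real.pi) (hb' : β < Real.pi)
    (hc' : γ < Real.pi) (h1 : Real.sin β * Real.sin γ < Real.cos α + Real.cos β * Real.cos γ)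
    (h2 : Real.sin α * Real.sin γ < Real.cos β + Real.cos α * Real.cos γ) : α + β + γ < Real.pi := by
  have key : ∀ x y : ℝ, 0 < x → 0 < y → x < Real.pi → y < Real.pi →
      Real.sin y * Real.sin γ < Real.cos x + Real.cos y * Real.cos γ → y + γ < Real.pi ∨ x < y + γ - Real.pi := by
    intro x y hx hy hx' hy' h
    by_cases hl : y + γ < Real.pi
    · exact Or.inl hl
    · right
      by_contra hcon
      push Not at hl hcon
      have := Real.cos_le_cos_of_nonneg_of_le_pi (by linarith) hx'.le hcon
      rw [Real.cos_sub_pi, Real.cos_add] at this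
      linarith
  have fin : ∀ x y : ℝ, 0 < x → 0 < y → x < Real.pi → y < Real.pi →
      Real.sin y * Real.sin γ < Real.cos x + Real.cos y * Real.cos γ → y + γ < Real.pi → x + y + γ < Real.pi := by
    intro x y hx hy hx' hy' h hl
    by_contra hcon
    push Not at hcon
    have := Real.cos_le_cos_of_nonneg_of_le_pi (x := Real.pi - (y + γ)) (by linarith) hx'.le (by linarith)
    rw [Real.cos_pi_sub, Real.cos_add] at this
    linarith
  rcases key α β ha hb ha' hb' h1 with h | h
  · exact fin α β ha hb ha' hb' h1 h
  · rcases key β α hb ha hb' ha' h2 with h' | h'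
    · linarith [fin β α hb ha hb' ha' h2 h']
    · linarith

lemma LF (bi bj bk bh D c Nij Nkh Nik Njk Nih Njh : ℝ) (hi : 0 < bi) (hj : 0 < bj) (hk : 0 < bk)
    (hh : 0 < bh) (hD : 0 < D)
    (T1 : 2 * Nij * Nik * Nih + Nij ^ 2 * bj + Nik ^ 2 * bk + Nih ^ 2 * bh - bj * bk * bh = D ^ 2)
    (T2 : 2 * Nij * Njk * Njh + Nij ^ 2 * bi + Njk ^ 2 * bk + Njh ^ 2 * bh - bi * bk * bh = D ^ 2)
    (T3 : Nik * Njk * bk + Nih * Njh * bh + Nij * (Nik * Njh + Nih * Njk) + Nkh * (bk * bh - Nij ^ 2)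
      = D ^ 2 * c) :
    Lg (Nij / (√bk * √bh)) (Nkh / (√bi * √bj)) (Nik / (√bj * √bh)) (Njk / (√bi * √bh))
      (Nih / (√bj * √bk)) (Njh / (√bi * √bk)) = Real.arcosh c := by
  obtain ⟨w, hw, rfl⟩ : ∃ x, 0 < x ∧ bi = x ^ 2 := ⟨√bi, Real.sqrt_pos.2 hi, (Real.sq_sqrt hi.le).symm⟩
  obtain ⟨x, hx, rfl⟩ : ∃ x, 0 < x ∧ bj = x ^ 2 := ⟨√bj, Real.sqrt_pos.2 hj, (Real.sq_sqrt hj.le).symm⟩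
  obtain ⟨y, hy, rfl⟩ : ∃ x, 0 < x ∧ bk = x ^ 2 := ⟨√bk, Real.sqrt_pos.2 hk, (Real.sq_sqrt hk.le).symm⟩
  obtain ⟨z, hz, rfl⟩ : ∃ x, 0 < x ∧ bh = x ^ 2 := ⟨√bh, Real.sqrt_pos.2 hh, (Real.sq_sqrt hh.le).symm⟩
  rw [Real.sqrt_sq hw.le, Real.sqrt_sq hx.le, Real.sqrt_sq hy.le, Real.sqrt_sq hz.le]
  unfold Lg
  congr 1
  have e1 : tri (Nij / (y * z)) (Nik / (x * z)) (Nih / (x * y)) = (D / (x * y * z)) ^ 2 := by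
    unfold tri; rw [div_pow D, ← T1]; field_simp
  have e2 : tri (Nij / (y * z)) (Njk / (w * z)) (Njh / (w * y)) = (D / (w * y * z)) ^ 2 := by
    unfold tri; rw [div_pow D, ← T2]; field_simp
  have e3 : num (Nij / (y * z)) (Nkh / (w * x)) (Nik / (x * z)) (Njk / (w * z)) (Nih / (x * y)) (Njh / (w * y))
      = D ^ 2 * c / (w * x * y ^ 2 * z ^ 2) := by
    unfold num; rw [← T3]; field_simp
  rw [e1, e2, e3, ← mul_pow, Real.sqrt_sq (by positivity)]
  field_simp


lemma Cn_sq0 (c : Fin 6 → ℝ) : Cn c 0 ^ 2 - Bn c 2 * Bn c 3 = Dc c * (1 - c 0 ^ 2) := by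
  simp [Cn, Bn, Dc, num, tri, Dl]; ring
lemma Cn_sq1 (c : Fin 6 → ℝ) : Cn c 1 ^ 2 - Bn c 1 * Bn c 3 = Dc c * (1 - c 1 ^ 2) := by
  simp [Cn, Bn, Dc, num, tri, Dl]; ring
lemma Cn_sq2 (c : Fin 6 → ℝ) : Cn c 2 ^ 2 - Bn c 1 * Bn c 2 = Dc c * (1 - c 2 ^ 2) := by
  simp [Cn, Bn, Dc, num, tri, Dl]; ring
lemma Cn_sq3 (c : Fin 6 → ℝ) : Cn c 3 ^ 2 - Bn c 0 * Bn c 3 = Dc c * (1 - c 3 ^ 2) := by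
  simp [Cn, Bn, Dc, num, tri, Dl]; ring
lemma Cn_sq4 (c : Fin 6 → ℝ) : Cn c 4 ^ 2 - Bn c 0 * Bn c 2 = Dc c * (1 - c 4 ^ 2) := by
  simp [Cn, Bn, Dc, num, tri, Dl]; ring
lemma Cn_sq5 (c : Fin 6 → ℝ) : Cn c 5 ^ 2 - Bn c 0 * Bn c 1 = Dc c * (1 - c 5 ^ 2) := by
  simp [Cn, Bn, Dc, num, tri, Dl]; ring

lemma Xc_sq (c : Fin 6 → ℝ) (hc : ∀ e, 1 ≤ c e) (e : Fin 6) :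
    ∃ k : ℝ, 0 < k ∧ Xc c e = Cn c e * k ∧ 1 - Xc c e ^ 2 = Dc c * (c e ^ 2 - 1) * k ^ 2 := by
  have key : ∀ N bk bh D x : ℝ, 0 < bk → 0 < bh → N ^ 2 - bk * bh = D * (1 - x ^ 2) →
      ∃ k : ℝ, 0 < k ∧ N / (√bk * √bh) = N * k ∧ 1 - (N / (√bk * √bh)) ^ 2 = D * (x ^ 2 - 1) * k ^ 2 := by
    intro N bk bh D x hk hh h
    refine ⟨(√bk * √bh)⁻¹, by positivity, div_eq_mul_inv _ _, ?_⟩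
    rw [div_pow, inv_pow, mul_pow, Real.sq_sqrt hk.le, Real.sq_sqrt hh.le]
    field_simp
    linarith
  have hB := Bn_pos c hc
  fin_cases e
  · exact key _ _ _ _ _ (hB _) (hB _) (Cn_sq0 c)
  · exact key _ _ _ _ _ (hB _) (hB _) (Cn_sq1 c)
  · exact key _ _ _ _ _ (hB _) (hB _) (Cn_sq2 c)
  · exact key _ _ _ _ _ (hB _) (hB _) (Cn_sq3 c)
  · exact key _ _ _ _ _ (hB _) (hB _) (Cn_sq4 c)
  · exact key _ _ _ _ _ (hB _) (hB _) (Cn_sq5 c)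

lemma Xc_mem (c : Fin 6 → ℝ) (hc : ∀ e, 1 < c e) (hD : 0 < Dc c) (e : Fin 6) :
    -1 < Xc c e ∧ Xc c e < 1 := by
  obtain ⟨k, hk, -, h⟩ := Xc_sq c (fun e => (hc e).le) e
  have h1 : 0 < c e ^ 2 - 1 := by nlinarith [hc e]
  have h2 : 0 < 1 - Xc c e ^ 2 := by rw [h]; positivity
  constructor <;> nlinarith

lemma star_arccos (x y z : ℝ) (hx : -1 < x ∧ x < 1) (hy : -1 < y ∧ y < 1) (hz : -1 < z ∧ z < 1)
    (h1 : √(1 - y ^ 2) * √(1 - z ^ 2) < x + y * z) (h2 : √(1 - x ^ 2) * √(1 - z ^ 2) < y + x * z) :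
    Real.arccos x + Real.arccos y + Real.arccos z < Real.pi := by
  have lp : ∀ w : ℝ, -1 < w ∧ w < 1 → Real.arccos w < Real.pi := by
    intro w hw
    refine lt_of_le_of_ne (Real.arccos_le_pi w) fun h => ?_
    rw [Real.arccos_eq_pi] at h
    linarith [hw.1]
  refine star_lt _ _ _ (Real.arccos_pos.2 hx.2) (Real.arccos_pos.2 hy.2)
    (lp x hx) (lp y hy) (lp z hz) ?_ ?_
  · rw [Real.sin_arccos, Real.sin_arccos, Real.cos_arccos hx.1.le hx.2.le, Real.cos_arccos hy.1.le hy.2.le,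
      Real.cos_arccos hz.1.le hz.2.le]
    exact h1
  · rw [Real.sin_arccos, Real.sin_arccos, Real.cos_arccos hx.1.le hx.2.le, Real.cos_arccos hy.1.le hy.2.le,
      Real.cos_arccos hz.1.le hz.2.le]
    exact h2

set_option maxHeartbeats 2000000 in
lemma arccos_mem_Bset (c : Fin 6 → ℝ) (hc : ∀ e, 1 < c e) (hD : 0 < Dc c) :
    (fun e => Real.arccos (Xc c e)) ∈ Bset := by
  have hB := Bn_pos c fun e => (hc e).le
  have hX := Xc_mem c hc hD
  refine ⟨fun e => Real.arccos_pos.2 (hX e).2, ?_, ?_, ?_, ?_⟩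
  · refine star_arccos _ _ _ (hX _) (hX _) (hX _) ?_ ?_
    · have := starfun (Bn c 1) (Bn c 2) (Bn c 3) (Dc c) (Cn c 0) (Cn c 1) (Cn c 2) (c 5) (c 1) (c 2)
        (hB _) (hB _) (hB _) hD (hc _) (hc _) (hc _) (by simp [Cn, Bn, Dc, num, tri, Dl]; ring)
        (by simp [Cn, Bn, Dc, num, tri, Dl]; ring) (by simp [Cn, Bn, Dc, num, tri, Dl]; ring)
      exact this
    · have := starfun (Bn c 2) (Bn c 1) (Bn c 3) (Dc c) (Cn c 1) (Cn c 0) (Cn c 2) (c 4) (c 0) (c 2)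
        (hB _) (hB _) (hB _) hD (hc _) (hc _) (hc _) (by simp [Cn, Bn, Dc, num, tri, Dl]; ring)
        (by simp [Cn, Bn, Dc, num, tri, Dl]; ring) (by simp [Cn, Bn, Dc, num, tri, Dl]; ring)
      rw [mul_comm √(Bn c 2) √(Bn c 1)] at this
      exact this
  · refine star_arccos _ _ _ (hX _) (hX _) (hX _) ?_ ?_
    · have := starfun (Bn c 0) (Bn c 2) (Bn c 3) (Dc c) (Cn c 0) (Cn c 3) (Cn c 4) (c 5) (c 3) (c 4)
        (hB _) (hB _) (hB _) hD (hc _) (hc _) (hc _) (by simp [Cn, Bn, Dc, num, tri, Dl]; ring)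
        (by simp [Cn, Bn, Dc, num, tri, Dl]; ring) (by simp [Cn, Bn, Dc, num, tri, Dl]; ring)
      exact this
    · have := starfun (Bn c 2) (Bn c 0) (Bn c 3) (Dc c) (Cn c 3) (Cn c 0) (Cn c 4) (c 2) (c 0) (c 4)
        (hB _) (hB _) (hB _) hD (hc _) (hc _) (hc _) (by simp [Cn, Bn, Dc, num, tri, Dl]; ring)
        (by simp [Cn, Bn, Dc, num, tri, Dl]; ring) (by simp [Cn, Bn, Dc, num, tri, Dl]; ring)
      rw [mul_comm √(Bn c 2) √(Bn c 0)] at this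
      exact this
  · refine star_arccos _ _ _ (hX _) (hX _) (hX _) ?_ ?_
    · have := starfun (Bn c 0) (Bn c 1) (Bn c 3) (Dc c) (Cn c 1) (Cn c 3) (Cn c 5) (c 4) (c 3) (c 5)
        (hB _) (hB _) (hB _) hD (hc _) (hc _) (hc _) (by simp [Cn, Bn, Dc, num, tri, Dl]; ring)
        (by simp [Cn, Bn, Dc, num, tri, Dl]; ring) (by simp [Cn, Bn, Dc, num, tri, Dl]; ring)
      exact this
    · have := starfun (Bn c 1) (Bn c 0) (Bn c 3) (Dc c) (Cn c 3) (Cn c 1) (Cn c 5) (c 2) (c 1) (c 5)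
        (hB _) (hB _) (hB _) hD (hc _) (hc _) (hc _) (by simp [Cn, Bn, Dc, num, tri, Dl]; ring)
        (by simp [Cn, Bn, Dc, num, tri, Dl]; ring) (by simp [Cn, Bn, Dc, num, tri, Dl]; ring)
      rw [mul_comm √(Bn c 1) √(Bn c 0)] at this
      exact this
  · refine star_arccos _ _ _ (hX _) (hX _) (hX _) ?_ ?_
    · have := starfun (Bn c 0) (Bn c 1) (Bn c 2) (Dc c) (Cn c 2) (Cn c 4) (Cn c 5) (c 3) (c 4) (c 5)
        (hB _) (hB _) (hB _) hD (hc _) (hc _) (hc _) (by simp [Cn, Bn, Dc, num, tri, Dl]; ring)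
        (by simp [Cn, Bn, Dc, num, tri, Dl]; ring) (by simp [Cn, Bn, Dc, num, tri, Dl]; ring)
      exact this
    · have := starfun (Bn c 1) (Bn c 0) (Bn c 2) (Dc c) (Cn c 4) (Cn c 2) (Cn c 5) (c 1) (c 2) (c 5)
        (hB _) (hB _) (hB _) hD (hc _) (hc _) (hc _) (by simp [Cn, Bn, Dc, num, tri, Dl]; ring)
        (by simp [Cn, Bn, Dc, num, tri, Dl]; ring) (by simp [Cn, Bn, Dc, num, tri, Dl]; ring)
      rw [mul_comm √(Bn c 1) √(Bn c 0)] at this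
      exact this

set_option maxHeartbeats 2000000 in
lemma Lmap_arccos (c : Fin 6 → ℝ) (hc : ∀ e, 1 < c e) (hD : 0 < Dc c) (e : Fin 6) :
    Lmap (fun e => Real.arccos (Xc c e)) e = Real.arcosh (c e) := by
  have hB := Bn_pos c fun e => (hc e).le
  have hX := Xc_mem c hc hD
  have hco : co (fun e => Real.arccos (Xc c e)) = Xc c := by
    funext e
    exact Real.cos_arccos (hX e).1.le (hX e).2.le
  unfold Lmap
  rw [hco]
  fin_cases e
  · have := LF (Bn c 0) (Bn c 1) (Bn c 2) (Bn c 3) (Dc c) (c 0) (Cn c 0) (Cn c 5)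
      (Cn c 1) (Cn c 3) (Cn c 2) (Cn c 4) (hB _) (hB _) (hB _) (hB _) hD
      (by simp [Cn, Bn, Dc, num, tri, Dl]; ring) (by simp [Cn, Bn, Dc, num, tri, Dl]; ring)
      (by simp [Cn, Bn, Dc, num, tri, Dl]; ring)
    exact this
  · have := LF (Bn c 0) (Bn c 2) (Bn c 1) (Bn c 3) (Dc c) (c 1) (Cn c 1) (Cn c 4)
      (Cn c 0) (Cn c 3) (Cn c 2) (Cn c 5) (hB _) (hB _) (hB _) (hB _) hD
      (by simp [Cn, Bn, Dc, num, tri, Dl]; ring) (by simp [Cn, Bn, Dc, num, tri, Dl]; ring)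
      (by simp [Cn, Bn, Dc, num, tri, Dl]; ring)
    rw [mul_comm √(Bn c 2) √(Bn c 1)] at this
    exact this
  · have := LF (Bn c 0) (Bn c 3) (Bn c 1) (Bn c 2) (Dc c) (c 2) (Cn c 2) (Cn c 3)
      (Cn c 0) (Cn c 4) (Cn c 1) (Cn c 5) (hB _) (hB _) (hB _) (hB _) hD
      (by simp [Cn, Bn, Dc, num, tri, Dl]; ring) (by simp [Cn, Bn, Dc, num, tri, Dl]; ring)
      (by simp [Cn, Bn, Dc, num, tri, Dl]; ring)
    rw [mul_comm √(Bn c 3) √(Bn c 2), mul_comm √(Bn c 3) √(Bn c 1)] at this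
    exact this
  · have := LF (Bn c 1) (Bn c 2) (Bn c 0) (Bn c 3) (Dc c) (c 3) (Cn c 3) (Cn c 2)
      (Cn c 0) (Cn c 1) (Cn c 4) (Cn c 5) (hB _) (hB _) (hB _) (hB _) hD
      (by simp [Cn, Bn, Dc, num, tri, Dl]; ring) (by simp [Cn, Bn, Dc, num, tri, Dl]; ring)
      (by simp [Cn, Bn, Dc, num, tri, Dl]; ring)
    rw [mul_comm √(Bn c 2) √(Bn c 0), mul_comm √(Bn c 1) √(Bn c 0)] at this
    exact this
  · have := LF (Bn c 1) (Bn c 3) (Bn c 0) (Bn c 2) (Dc c) (c 4) (Cn c 4) (Cn c 1)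
      (Cn c 0) (Cn c 2) (Cn c 3) (Cn c 5) (hB _) (hB _) (hB _) (hB _) hD
      (by simp [Cn, Bn, Dc, num, tri, Dl]; ring) (by simp [Cn, Bn, Dc, num, tri, Dl]; ring)
      (by simp [Cn, Bn, Dc, num, tri, Dl]; ring)
    rw [mul_comm √(Bn c 3) √(Bn c 2), mul_comm √(Bn c 3) √(Bn c 0), mul_comm √(Bn c 1) √(Bn c 0)] at this
    exact this
  · have := LF (Bn c 2) (Bn c 3) (Bn c 0) (Bn c 1) (Dc c) (c 5) (Cn c 5) (Cn c 0)
      (Cn c 1) (Cn c 2) (Cn c 3) (Cn c 4) (hB _) (hB _) (hB _) (hB _) hD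
      (by simp [Cn, Bn, Dc, num, tri, Dl]; ring) (by simp [Cn, Bn, Dc, num, tri, Dl]; ring)
      (by simp [Cn, Bn, Dc, num, tri, Dl]; ring)
    rw [mul_comm √(Bn c 3) √(Bn c 1), mul_comm √(Bn c 2) √(Bn c 1), mul_comm √(Bn c 3) √(Bn c 0), mul_comm √(Bn c 2) √(Bn c 0)] at this
    exact this


noncomputable def ch (l : Fin 6 → ℝ) : Fin 6 → ℝ := fun e => Real.cosh (max (l e) 0)
noncomputable def Fmap (l : Fin 6 → ℝ) : Fin 6 → ℝ := fun e => Real.arccos (Xc (ch l) e)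
def Uset : Set (Fin 6 → ℝ) := {l | (∀ e, 0 < l e) ∧ 0 < Dc (ch l)}

lemma ch_ge (l : Fin 6 → ℝ) (e : Fin 6) : 1 ≤ ch l e := Real.one_le_cosh _
lemma ch_cont (e : Fin 6) : Continuous fun l => ch l e := by unfold ch; fun_prop
lemma Dc_cont : Continuous fun l => Dc (ch l) := by
  have h := ch_cont
  simp only [Dc, Dl]; fun_prop
lemma Xc_cont (e : Fin 6) : Continuous fun l => Xc (ch l) e := by
  have h := ch_cont
  have hC : ∀ e, Continuous fun l => Cn (ch l) e := by
    intro e; fin_cases e <;> simp only [Cn, num] <;> simp <;> fun_prop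
  have hB : ∀ v, Continuous fun l => Bn (ch l) v := by
    intro e; fin_cases e <;> simp only [Bn, tri] <;> simp <;> fun_prop
  have key : ∀ e v w, Continuous fun l => Cn (ch l) e / (√(Bn (ch l) v) * √(Bn (ch l) w)) := by
    intro e v w
    refine (hC e).div ((hB v).sqrt.mul (hB w).sqrt) fun l => ?_
    have h1 := Bn_pos (ch l) (ch_ge l) v
    have h2 := Bn_pos (ch l) (ch_ge l) w
    positivity
  fin_cases e <;> exact key _ _ _
lemma Fmap_cont : Continuous Fmap :=
  continuous_pi fun e => Real.continuous_arccos.comp (Xc_cont e)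

lemma Fmap_U (l : Fin 6 → ℝ) (hl : l ∈ Uset) : Fmap l ∈ Bset ∧ Lmap (Fmap l) = l := by
  obtain ⟨hp, hD⟩ := hl
  have hc : ∀ e, 1 < ch l e := by
    intro e
    unfold ch
    rw [Real.one_lt_cosh, max_eq_left (hp e).le]
    exact (hp e).ne'
  refine ⟨arccos_mem_Bset _ hc hD, ?_⟩
  funext e
  have := Lmap_arccos _ hc hD e
  unfold Fmap
  rw [this]
  unfold ch
  rw [max_eq_left (hp e).le, Real.arcosh_cosh (hp e).le]

lemma closure_U (l : Fin 6 → ℝ) (hl : ∀ e, 0 ≤ l e) (hD : 0 < Dc (ch l)) : l ∈ closure Uset := by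
  have ht : Tendsto (fun ε : ℝ => fun e => l e + ε) (𝓝[>] 0) (𝓝 l) := by
    have : Continuous (fun ε : ℝ => (fun e => l e + ε : Fin 6 → ℝ)) := by fun_prop
    have := this.tendsto 0
    simp only [add_zero] at this
    exact this.mono_left nhdsWithin_le_nhds
  refine mem_closure_of_tendsto ht ?_
  have h1 : ∀ᶠ ε in 𝓝[>] (0:ℝ), 0 < Dc (ch (fun e => l e + ε)) :=
    ht.eventually (Dc_cont.continuousAt.eventually (lt_mem_nhds hD))
  filter_upwards [h1, self_mem_nhdsWithin] with ε hε hε0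
  exact ⟨fun e => add_pos_of_nonneg_of_pos (hl e) hε0, hε⟩

lemma arccos_zero_of_one (c : Fin 6 → ℝ) (hc : ∀ e, 1 ≤ c e) (e : Fin 6) (he : c e = 1) :
    Real.arccos (Xc c e) = 0 := by
  obtain ⟨k, hk, h1, h2⟩ := Xc_sq c hc e
  have hC : 0 ≤ Cn c e := by
    have hp : ∀ f, 0 < c f := fun f => zero_lt_one.trans_le (hc f)
    have key : ∀ p q r s t u, c p = 1 → 0 ≤ num (c p) (c q) (c r) (c s) (c t) (c u) := by
      intro p q r s t u h
      rw [h]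
      unfold num
      have := hp r
      have := hp s
      have := hp t
      have := hp u
      have : 0 ≤ c r * c s + c t * c u + 1 * (c r * c u + c s * c t) := by positivity
      linarith
    fin_cases e <;> exact key _ _ _ _ _ _ he
  rw [he] at h2
  have h3 : 0 ≤ Xc c e := by rw [h1]; positivity
  rw [Real.arccos_eq_zero]
  nlinarith

lemma arccos_two (c : Fin 6 → ℝ) (hc : ∀ e, 1 ≤ c e) (hD : Dc c ≤ 0) (e : Fin 6) :
    Real.arccos (Xc c e) = 0 ∨ Real.arccos (Xc c e) = Real.pi := by
  obtain ⟨k, hk, -, h2⟩ := Xc_sq c hc e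
  have h : 1 - Xc c e ^ 2 ≤ 0 := by
    rw [h2]
    have : 0 ≤ c e ^ 2 - 1 := by nlinarith [hc e]
    have : 0 ≤ (c e ^ 2 - 1) * k ^ 2 := by positivity
    nlinarith
  rw [Real.arccos_eq_zero, Real.arccos_eq_pi]
  by_contra! hcon
  nlinarith

lemma exists_pi (c : Fin 6 → ℝ) (hc : ∀ e, 1 ≤ c e) (hD : Dc c ≤ 0) :
    ∃ e, Real.arccos (Xc c e) = Real.pi := by
  have hJ : Bn c 3 + c 5 * Cn c 0 + c 2 * Cn c 3 + c 4 * Cn c 1 = Dc c := by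
    simp [Cn, Bn, Dc, num, tri, Dl]; ring
  have hB := Bn_pos c hc 3
  obtain ⟨e, he⟩ : ∃ e, Cn c e < 0 := by
    by_contra! hcon
    have h1 := mul_nonneg (zero_le_one.trans (hc 5)) (hcon 0)
    have h2 := mul_nonneg (zero_le_one.trans (hc 2)) (hcon 3)
    have h3 := mul_nonneg (zero_le_one.trans (hc 4)) (hcon 1)
    linarith
  refine ⟨e, (arccos_two c hc hD e).resolve_left fun h => ?_⟩
  rw [Real.arccos_eq_zero] at h
  obtain ⟨k, hk, h1, -⟩ := Xc_sq c hc e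
  have := mul_neg_of_neg_of_pos he hk
  linarith

lemma two_val (s : Set ℝ) (hs : IsPreconnected s) (g : ℝ → ℝ) (hg : Continuous g)
    (h : ∀ t ∈ s, g t = 0 ∨ g t = Real.pi) (a b : ℝ) (ha : a ∈ s) (hb : b ∈ s) : g a = g b := by
  have key : ∀ a ∈ s, ∀ b ∈ s, g a = 0 → g b = Real.pi → False := by
    intro a ha b hb h0 h1
    have := hs.intermediate_value ha hb hg.continuousOn
    rw [h0, h1] at this
    obtain ⟨t, ht, hgt⟩ := this (show Real.pi / 2 ∈ Icc 0 Real.pi from ⟨by positivity, by linarith [Real.pi_pos]⟩)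
    rcases h t ht with h' | h' <;> linarith [Real.pi_pos]
  rcases h a ha with h1 | h1 <;> rcases h b hb with h2 | h2
  · rw [h1, h2]
  · exact (key a ha b hb h1 h2).elim
  · exact (key b hb a ha h2 h1).elim
  · rw [h1, h2]

lemma path_lemma (l : Fin 6 → ℝ) (hl : ∀ e, 0 ≤ l e) (hD : Dc (ch l) ≤ 0) :
    ∃ e t, 0 ≤ t ∧ t ≤ l e ∧ Fmap l e = Real.pi ∧ Function.update l e t ∈ closure Uset ∧
      Fmap (Function.update l e t) = Fmap l := by
  obtain ⟨e, he⟩ := exists_pi (ch l) (ch_ge l) hD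
  set γ : ℝ → Fin 6 → ℝ := fun t => Function.update l e t with hγ
  have hγc : Continuous γ := continuous_const.update e continuous_id
  have hγl : γ (l e) = l := Function.update_eq_self e l
  have hγp : ∀ t, 0 ≤ t → ∀ f, 0 ≤ γ t f := by
    intro t ht f
    by_cases hf : f = e
    · subst hf; simpa [hγ] using ht
    · simpa [hγ, hf] using hl f
  have hγe : Fmap (γ 0) e = 0 := by
    refine arccos_zero_of_one _ (ch_ge _) e ?_
    simp [ch, hγ]
  have hgc : ∀ f, Continuous fun t => Fmap (γ t) f :=
    fun f => (continuous_apply f).comp (Fmap_cont.comp hγc)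
  set Z : Set ℝ := {t | (0 ≤ t ∧ t ≤ l e) ∧ 0 < Dc (ch (γ t))} with hZ
  have hZne : Z.Nonempty := by
    by_contra hcon
    rw [Set.not_nonempty_iff_eq_empty] at hcon
    have h2 : ∀ t ∈ Icc 0 (l e), Fmap (γ t) e = 0 ∨ Fmap (γ t) e = Real.pi := by
      intro t ht
      refine arccos_two _ (ch_ge _) ?_ e
      by_contra hn
      push Not at hn
      have : t ∈ Z := ⟨ht, hn⟩
      rw [hcon] at this
      exact this
    have := two_val (Icc 0 (l e)) isPreconnected_Icc (fun t => Fmap (γ t) e) (hgc e) h2 0 (l e)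
      ⟨le_rfl, hl e⟩ ⟨hl e, le_rfl⟩
    simp only [hγe, hγl] at this
    have h3 : Fmap l e = Real.pi := he
    linarith [Real.pi_pos]
  have hZb : BddAbove Z := ⟨l e, fun t ht => ht.1.2⟩
  set T := sSup Z with hT
  have hTcl : T ∈ closure Z := csSup_mem_closure hZne hZb
  have hT1 : T ≤ l e := csSup_le hZne fun t ht => ht.1.2
  have hT0 : 0 ≤ T := by
    obtain ⟨t, ht⟩ := hZne
    exact ht.1.1.trans (le_csSup hZb ht)
  refine ⟨e, T, hT0, hT1, he, ?_, ?_⟩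
  · have hm : MapsTo γ Z (closure Uset) := fun t ht => closure_U _ (hγp t ht.1.1) ht.2
    have := map_mem_closure hγc hTcl hm
    rwa [closure_closure] at this
  · rcases hT1.eq_or_lt with h | h
    · rw [h]; exact congrArg Fmap hγl
    · funext f
      have h2 : ∀ t ∈ Ioc T (l e), Fmap (γ t) f = 0 ∨ Fmap (γ t) f = Real.pi := by
        intro t ht
        refine arccos_two _ (ch_ge _) ?_ f
        by_contra hn
        push Not at hn
        have : t ∈ Z := ⟨⟨hT0.trans ht.1.le, ht.2⟩, hn⟩
        exact absurd (le_csSup hZb this) (not_le.2 ht.1)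
      have hsub : Ioc T (l e) ⊆ {t | Fmap (γ t) f = Fmap (γ (l e)) f} := by
        intro t ht
        exact two_val (Ioc T (l e)) isPreconnected_Ioc (fun t => Fmap (γ t) f) (hgc f) h2 t (l e) ht ⟨h, le_rfl⟩
      have hcl : IsClosed {t | Fmap (γ t) f = Fmap (γ (l e)) f} := isClosed_eq (hgc f) continuous_const
      have := hcl.closure_subset_iff.2 hsub
      rw [closure_Ioc h.ne] at this
      have := this (left_mem_Icc.2 hT1)
      simp only [mem_setOf_eq, hγl] at this
      exact this

lemma Bset_bd (b : Fin 6 → ℝ) (hb : b ∈ Bset) (e : Fin 6) : 0 < b e ∧ b e ≤ Real.pi := by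
  obtain ⟨hp, h0, h1, h2, h3⟩ := hb
  have p0 := hp 0
  have p1 := hp 1
  have p2 := hp 2
  have p3 := hp 3
  have p4 := hp 4
  have p5 := hp 5
  refine ⟨hp e, ?_⟩
  fin_cases e <;> simp <;> linarith

lemma hcl_lemma (l : Fin 6 → ℝ) : ∃ l0 ∈ closure Uset, Fmap l0 = Fmap l ∧
    ∀ b ∈ Bset, ∑ e, (l e - l0 e) * (b e - Fmap l e) ≤ 0 := by
  set lp : Fin 6 → ℝ := fun e => max (l e) 0 with hlp
  have hlp0 : ∀ e, 0 ≤ lp e := fun e => le_max_right _ _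
  have hch : ch lp = ch l := by
    funext e; simp [ch, hlp]
  have hF : Fmap lp = Fmap l := by unfold Fmap; rw [hch]
  have term : ∀ b ∈ Bset, ∀ e, (l e - lp e) * (b e - Fmap l e) ≤ 0 := by
    intro b hb e
    rcases le_total (l e) 0 with h | h
    · have h1 : lp e = 0 := max_eq_right h
      have h2 : Fmap l e = 0 := by
        refine arccos_zero_of_one _ (ch_ge _) e ?_
        simp [ch, h]
      rw [h1, h2]
      exact mul_nonpos_of_nonpos_of_nonneg (by linarith) (by linarith [(Bset_bd b hb e).1])
    · have h1 : lp e = l e := max_eq_left h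
      rw [h1]; simp
  by_cases hD : 0 < Dc (ch lp)
  · exact ⟨lp, closure_U lp hlp0 hD, hF, fun b hb => Finset.sum_nonpos fun e _ => term b hb e⟩
  · push Not at hD
    obtain ⟨e, t, ht0, ht1, hpi, hcl, hFt⟩ := path_lemma lp hlp0 hD
    refine ⟨_, hcl, hFt.trans hF, fun b hb => Finset.sum_nonpos fun f _ => ?_⟩
    by_cases hf : f = e
    · subst hf
      have h1 := term b hb f
      rw [hF] at hpi
      have h2 : (lp f - t) * (b f - Fmap l f) ≤ 0 :=
        mul_nonpos_of_nonneg_of_nonpos (by linarith) (by linarith [(Bset_bd b hb f).2])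
      rw [Function.update_self]
      linarith
    · rw [Function.update_of_ne hf]
      exact term b hb f

lemma exists_cov : ∃ cov : (Fin 6 → ℝ) → ℝ, ContDiff ℝ 1 cov ∧ ConvexOn ℝ Set.univ cov ∧
      ∀ l e, fderiv ℝ cov l (Pi.single e 1) = Fmap l e := by
  obtain ⟨V, hV⟩ := exists_V
  obtain ⟨cov, hcov⟩ := legendre Bset aBase aBase_mem Real.pi
    (fun b hb e => by rw [abs_of_pos (Bset_bd b hb e).1]; exact (Bset_bd b hb e).2)
    Lmap V hV Fmap Fmap_cont Uset Fmap_U hcl_lemma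
  exact ⟨cov, grad_of_subgrad cov Fmap Fmap_cont hcov⟩

lemma div_match {n n' x y x' y' : ℝ} (hn : n = n')
    (hxy : (x = x' ∧ y = y') ∨ (x = y' ∧ y = x')) :
    n / (√x * √y) = n' / (√x' * √y') := by
  rcases hxy with ⟨h1, h2⟩ | ⟨h1, h2⟩
  · rw [hn, h1, h2]
  · rw [hn, h1, h2, mul_comm (√y')]

lemma phi_match (l : Fin 6 → ℝ) (i j k h : Fin 4) (hij : i ≠ j) (hik : i ≠ k) (hih : i ≠ h)
    (hjk : j ≠ k) (hjh : j ≠ h) (hkh : k ≠ h) :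
    phiE (toMat (fun m => max (l m) 0)) i j k h = Xc (ch l) (eIdx i j) := by
  unfold phiE bfun
  simp only [Real.sinh_sq]
  have key : ∀ r s : Fin 4, r ≠ s →
      Real.cosh (toMat (fun m => max (l m) 0) r s) = ch l (eIdx r s) := by
    intro r s hrs
    simp [toMat, ch, hrs]
  rw [key i j hij, key i k hik, key i h hih, key j k hjk, key j h hjh, key k h hkh]
  generalize ch l = c
  fin_cases i <;> fin_cases j <;> first | exact absurd rfl hij | skip
  all_goals (fin_cases k <;> first | exact absurd rfl hik | exact absurd rfl hjk | skip)
  all_goals (fin_cases h <;>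
    first | exact absurd rfl hih | exact absurd rfl hjh | exact absurd rfl hkh | skip)
  all_goals
    refine div_match ?_ ?_
    · simp [eIdx, Cn, num]
      try ring
    · first
      | (refine Or.inl ⟨?_, ?_⟩ <;> simp [eIdx, Bn, tri] <;> ring; done)
      | (refine Or.inr ⟨?_, ?_⟩ <;> simp [eIdx, Bn, tri] <;> ring; done)

end Helpers

theorem stmt17 :
    ∃ cov : (Fin 6 → ℝ) → ℝ,
      ContDiff ℝ 1 cov ∧ ConvexOn ℝ Set.univ cov ∧
      ∀ l : Fin 6 → ℝ, ∀ i j k h : Fin 4,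
        i ≠ j → i ≠ k → i ≠ h → j ≠ k → j ≠ h → k ≠ h →
        fderiv ℝ cov l (Pi.single (eIdx i j) 1) =
          Real.arccos (phiE (toMat (fun m => max (l m) 0)) i j k h) := by
  obtain ⟨cov, h1, h2, h3⟩ := exists_cov
  refine ⟨cov, h1, h2, fun l i j k h hij hik hih hjk hjh hkh => ?_⟩
  rw [h3, phi_match l i j k h hij hik hih hjk hjh hkh]
  rfl
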